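/- Let m ≥ 1, n ≥ 1, D ≥ 1 be integers. For every positive integer N there exists a constant C depending only on m, n, D, N such that the following holds. Let S ⊆ ℝ^n be a finite set with |S| ≤ N and diameter at most 1, and for each x ∈ S let G(x) ⊆ 𝒫⃗ be a nonempty convex set. Then there exists S′ ⊆ S with |S′| ≤ 2^(D·binom(n+m−1, n)) such that ‖(G(x))_{x∈S}‖_{Ẇ^m(S)} ≤ C·‖(G(x))_{x∈S′}‖_{Ẇ^m(S′)}, where for any finite T ⊆ ℝ^n, ‖(G(x))_{x∈T}‖_{Ẇ^m(T)} := inf { ‖(P⃗^x)_{x∈T}‖_{Ẇ^m(T)} : P⃗^x ∈ G(x) for all x ∈ T }. -/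

import Mathlib

open scoped BigOperators Classical

noncomputable section

/-- `En n` is Euclidean space `ℝ^n`. -/
abbrev En (n : ℕ) : Type := EuclideanSpace ℝ (Fin n)

/-- First-order partial derivative `∂_i f` in the `i`-th coordinate direction. -/
noncomputable def pd1 {n : ℕ} (i : Fin n) (f : En n → ℝ) : En n → ℝ :=
  fun x => fderiv ℝ f x (EuclideanSpace.single i 1)

/-- Higher-order partial derivative `∂^α f` for a multi-index `α`. -/
noncomputable def pdalpha {n : ℕ} (α : Fin n → ℕ) (f : En n → ℝ) : En n → ℝ :=
  (List.finRange n).foldr (fun i g => (pd1 i)^[α i] g) f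

/-- First-order partial derivative within a set `s`. -/
noncomputable def pd1W {n : ℕ} (s : Set (En n)) (i : Fin n) (f : En n → ℝ) : En n → ℝ :=
  fun x => fderivWithin ℝ f s x (EuclideanSpace.single i 1)

/-- Higher-order partial derivative `∂^α f` within a set `s`. -/
noncomputable def pdalphaW {n : ℕ} (s : Set (En n)) (α : Fin n → ℕ) (f : En n → ℝ) : En n → ℝ :=
  (List.finRange n).foldr (fun i g => (pd1W s i)^[α i] g) f

/-- `∂^α` of a multivariate polynomial (formal derivative). -/
noncomputable def polyPD {n : ℕ} (α : Fin n → ℕ) (p : MvPolynomial (Fin n) ℝ) :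
    MvPolynomial (Fin n) ℝ :=
  (List.finRange n).foldr (fun i q => (fun r => MvPolynomial.pderiv i r)^[α i] q) p

/-- The value `∂^α p (x)` of the `α`-th derivative of a polynomial at `x`. -/
noncomputable def polyPDval {n : ℕ} (α : Fin n → ℕ) (p : MvPolynomial (Fin n) ℝ) (x : En n) : ℝ :=
  MvPolynomial.eval (fun i => x i) (polyPD α p)

/-- The `(m-1)`-jet (Taylor polynomial of degree `≤ m-1`) of `f` at `x`. -/
noncomputable def jetScalar (m : ℕ) {n : ℕ} (f : En n → ℝ) (x : En n) :
    MvPolynomial (Fin n) ℝ :=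
  ∑ α ∈ (Finset.univ : Finset (Fin n → Fin m)).filter (fun α => (∑ i, (α i : ℕ)) ≤ m - 1),
    MvPolynomial.C (pdalpha (fun i => (α i : ℕ)) f x / ((∏ i, Nat.factorial (α i : ℕ) : ℕ) : ℝ))
      * ∏ i, (MvPolynomial.X i - MvPolynomial.C (x i)) ^ ((α i : ℕ))

/-- The `(m-1)`-jet of `f` at `x`, with derivatives taken within a set `s`. -/
noncomputable def jetScalarW (m : ℕ) {n : ℕ} (s : Set (En n)) (f : En n → ℝ) (x : En n) :
    MvPolynomial (Fin n) ℝ :=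
  ∑ α ∈ (Finset.univ : Finset (Fin n → Fin m)).filter (fun α => (∑ i, (α i : ℕ)) ≤ m - 1),
    MvPolynomial.C (pdalphaW s (fun i => (α i : ℕ)) f x / ((∏ i, Nat.factorial (α i : ℕ) : ℕ) : ℝ))
      * ∏ i, (MvPolynomial.X i - MvPolynomial.C (x i)) ^ ((α i : ℕ))

/-- The vector-valued `(m-1)`-jet `J_x F ∈ 𝒫⃗` of `F : ℝ^n → ℝ^D` at `x`. -/
noncomputable def jetD (m : ℕ) {n D : ℕ} (F : En n → Fin D → ℝ) (x : En n) :
    Fin D → MvPolynomial (Fin n) ℝ :=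
  fun j => jetScalar m (fun y => F y j) x

/-- The vector-valued `(m-1)`-jet of `F` at `x`, derivatives within `s`. -/
noncomputable def jetDW (m : ℕ) {n D : ℕ} (s : Set (En n)) (F : En n → Fin D → ℝ) (x : En n) :
    Fin D → MvPolynomial (Fin n) ℝ :=
  fun j => jetScalarW m s (fun y => F y j) x

/-- Truncation of a polynomial to total degree `≤ k`. -/
noncomputable def truncDeg {n : ℕ} (k : ℕ) (p : MvPolynomial (Fin n) ℝ) :
    MvPolynomial (Fin n) ℝ :=
  ∑ s ∈ p.support.filter (fun s => (s.sum fun _ e => e) ≤ k),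
    MvPolynomial.monomial s (MvPolynomial.coeff s p)

/-- The degree-`k` Taylor truncation of a polynomial at `x` (the jet `J_x p` of order `k`). -/
noncomputable def taylorTrunc {n : ℕ} (k : ℕ) (x : En n) (p : MvPolynomial (Fin n) ℝ) :
    MvPolynomial (Fin n) ℝ :=
  MvPolynomial.bind₁ (fun i => MvPolynomial.X i - MvPolynomial.C (x i))
    (truncDeg k (MvPolynomial.bind₁ (fun i => MvPolynomial.X i + MvPolynomial.C (x i)) p))

/-- The ring multiplication `p ⊙_x q := J_x(pq)` on degree-`k` jets at `x`. -/
noncomputable def odot {n : ℕ} (k : ℕ) (x : En n) (p q : MvPolynomial (Fin n) ℝ) :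
    MvPolynomial (Fin n) ℝ :=
  taylorTrunc k x (p * q)

/-- `(Γ x M)_{x ∈ E, M > 0}` is a shape field with jets of degree `≤ k` and `d` components:
each `Γ x M` is a convex set of `d`-tuples of polynomials of degree `≤ k`, monotone in `M`. -/
def IsShapeField {N : ℕ} (k d : ℕ) (E : Finset (En N))
    (Γ : En N → ℝ → Set (Fin d → MvPolynomial (Fin N) ℝ)) : Prop :=
  (∀ x ∈ E, ∀ M : ℝ, 0 < M → Convex ℝ (Γ x M)) ∧
  (∀ x ∈ E, ∀ M : ℝ, 0 < M → ∀ P ∈ Γ x M, ∀ j, (P j).totalDegree ≤ k) ∧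
  (∀ x ∈ E, ∀ M' M : ℝ, 0 < M' → M' ≤ M → Γ x M' ⊆ Γ x M)

/-- `(C_w, δmax)`-convexity of a shape field with jets of degree `≤ k`. -/
def SFConvex {N : ℕ} (k d : ℕ) (E : Finset (En N))
    (Γ : En N → ℝ → Set (Fin d → MvPolynomial (Fin N) ℝ)) (Cw δmax : ℝ) : Prop :=
  ∀ δ : ℝ, 0 < δ → δ ≤ δmax → ∀ x ∈ E, ∀ M : ℝ, 0 < M →
    ∀ P₁ P₂ : Fin d → MvPolynomial (Fin N) ℝ, P₁ ∈ Γ x M → P₂ ∈ Γ x M →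
    ∀ Q₁ Q₂ : MvPolynomial (Fin N) ℝ, Q₁.totalDegree ≤ k → Q₂.totalDegree ≤ k →
    (∀ α : Fin N → ℕ, (∑ i, α i) ≤ k → ∀ j,
      |polyPDval α (P₁ j - P₂ j) x| ≤ M * δ ^ (k + 1 - ∑ i, α i)) →
    (∀ α : Fin N → ℕ, (∑ i, α i) ≤ k →
      |polyPDval α Q₁ x| ≤ δ ^ (-((∑ i, α i : ℕ) : ℤ)) ∧
      |polyPDval α Q₂ x| ≤ δ ^ (-((∑ i, α i : ℕ) : ℤ))) →
    odot k x Q₁ Q₁ + odot k x Q₂ Q₂ = 1 →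
    (fun j => odot k x (odot k x Q₁ Q₁) (P₁ j) + odot k x (odot k x Q₂ Q₂) (P₂ j))
      ∈ Γ x (Cw * M)

/-- `‖(P^x)_{x ∈ S}‖_{Ẇ^m(S)} ≤ M` : the homogeneous Whitney seminorm bound. -/
def WSemiLE (m : ℕ) {N d : ℕ} (S : Finset (En N))
    (P : En N → Fin d → MvPolynomial (Fin N) ℝ) (M : ℝ) : Prop :=
  ∀ x ∈ S, ∀ y ∈ S, x ≠ y → ∀ α : Fin N → ℕ, (∑ i, α i) ≤ m - 1 → ∀ j,
    |polyPDval α (P x j - P y j) x| ≤ M * dist x y ^ (m - ∑ i, α i)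

/-- The homogeneous Whitney seminorm `‖(P^x)_{x ∈ S}‖_{Ẇ^m(S)}`. -/
noncomputable def WNormHomog (m : ℕ) {N d : ℕ} (S : Finset (En N))
    (P : En N → Fin d → MvPolynomial (Fin N) ℝ) : ℝ :=
  sSup {r : ℝ | ∃ x ∈ S, ∃ y ∈ S, x ≠ y ∧ ∃ α : Fin N → ℕ, (∑ i, α i) ≤ m - 1 ∧ ∃ j : Fin d,
    r = |polyPDval α (P x j - P y j) x| / dist x y ^ (m - ∑ i, α i)}

/-- The lower-order part of the Whitney norm. -/
noncomputable def WNormLow (m : ℕ) {N d : ℕ} (S : Finset (En N))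
    (P : En N → Fin d → MvPolynomial (Fin N) ℝ) : ℝ :=
  sSup {r : ℝ | ∃ x ∈ S, ∃ α : Fin N → ℕ, (∑ i, α i) ≤ m - 1 ∧ ∃ j : Fin d,
    r = |polyPDval α (P x j) x|}

/-- The Whitney norm `‖(P^x)_{x ∈ S}‖_{W^m(S)}`. -/
noncomputable def WNormFull (m : ℕ) {N d : ℕ} (S : Finset (En N))
    (P : En N → Fin d → MvPolynomial (Fin N) ℝ) : ℝ :=
  WNormLow m S P + WNormHomog m S P

/-- `‖F‖_{C^m} ≤ M`: all partials of order `≤ m` of all components bounded by `M`. -/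
def CmLE (m : ℕ) {n D : ℕ} (F : En n → Fin D → ℝ) (M : ℝ) : Prop :=
  ∀ α : Fin n → ℕ, (∑ i, α i) ≤ m → ∀ x : En n, ∀ j, |pdalpha α (fun y => F y j) x| ≤ M

/-- `‖F‖_{Ċ^m} ≤ M`: all partials of order `= m` of all components bounded by `M`. -/
def CmHomogLE (m : ℕ) {n D : ℕ} (F : En n → Fin D → ℝ) (M : ℝ) : Prop :=
  ∀ α : Fin n → ℕ, (∑ i, α i) = m → ∀ x : En n, ∀ j, |pdalpha α (fun y => F y j) x| ≤ M

/-- `‖F‖_{C^{m-1,1}} ≤ M`. -/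
def Cm11LE (m : ℕ) {n D : ℕ} (F : En n → Fin D → ℝ) (M : ℝ) : Prop :=
  (∀ α : Fin n → ℕ, (∑ i, α i) ≤ m - 1 → ∀ x : En n, ∀ j,
    |pdalpha α (fun y => F y j) x| ≤ M) ∧
  (∀ α : Fin n → ℕ, (∑ i, α i) = m - 1 → ∀ j, ∀ x y : En n,
    |pdalpha α (fun z => F z j) x - pdalpha α (fun z => F z j) y| ≤ M * dist x y)

/-- A closed cube in `ℝ^n` with lower corner `a` and side length `δ`. -/
def cube {n : ℕ} (a : En n) (δ : ℝ) : Set (En n) := {y | ∀ i, a i ≤ y i ∧ y i ≤ a i + δ}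

/-- The embedding `ℝ^n → ℝ^{n+D}`, `x ↦ (x, 0)`. -/
noncomputable def embed (n D : ℕ) (x : En n) : En (n + D) :=
  (EuclideanSpace.equiv (Fin (n + D)) ℝ).symm
    (Fin.append (fun i : Fin n => x i) (fun _ : Fin D => (0 : ℝ)))

/-- The projection `ℝ^{n+D} → ℝ^n`, `(x, ξ) ↦ x`. -/
noncomputable def projn (n D : ℕ) (z : En (n + D)) : En n :=
  (EuclideanSpace.equiv (Fin n) ℝ).symm (fun i => z (Fin.castAdd D i))

/-- Restriction of a polynomial on `ℝ^{n+D}` to `ℝ^n × {0}`, as a polynomial on `ℝ^n`. -/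
noncomputable def restrict0 (n D : ℕ) (p : MvPolynomial (Fin (n + D)) ℝ) :
    MvPolynomial (Fin n) ℝ :=
  MvPolynomial.aeval
    (Fin.append (fun i : Fin n => (MvPolynomial.X i : MvPolynomial (Fin n) ℝ))
      (fun _ : Fin D => 0)) p


/-- The selection seminorm `‖(G(x))_{x∈T}‖_{Ẇ^m(T)}`: the infimum of homogeneous Whitney
seminorms of selections of the family `(G x)_{x ∈ T}`. -/
noncomputable def selNormHomog (m : ℕ) {N d : ℕ} (T : Finset (En N))
    (G : En N → Set (Fin d → MvPolynomial (Fin N) ℝ)) : ℝ :=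
  sInf {r : ℝ | ∃ P : En N → Fin d → MvPolynomial (Fin N) ℝ,
    (∀ x ∈ T, P x ∈ G x) ∧ r = WNormHomog m T P}

/-! It suffices to remove one point from a set of more than `2 ^ dim 𝒫⃗` points at the cost of a
constant factor. If this failed, then by Hahn–Banach some functional `f` dominated by the Whitney
seminorm would be large on every selection of `G` over `S`, although `S.erase x` has small
selections for every `x`. Suppose `c : S → [0, 1]` vanishes at `a`, equals `1` at `b`, and is such
that `P ↦ f (c • P)` is still bounded by the Whitney seminorm. If `P` and `Q` are small selections
over `S.erase b` and `S.erase a`, then `(1 - c) • P + c • Q` is a selection over `S` on which `f`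
is small, a contradiction.

That such a weight `c` exists, with a bound depending only on the cardinality of `S` and on
`m, n, D`, is proved in an ultrapower. There the Whitney seminorms turn into lattices over the
valuation ring of finite hyperreals, and these form an ultrametric: at scale `δ` the seminorm
`max_α |∂^α p(x)| / δ^(m - |α|)` changes by a bounded factor when `x` moves by `δ`. The weights
that keep `f` bounded form a module over the valuation ring, and it is enough to find one that is
not constant modulo the maximal ideal. Along the splittings of the ultrametric tree, every
dimension lost by the reduction of this module is gained by a space of functionals on `𝒫⃗`. So a
tree with `k` leaves has `k ≤ r * 2 ^ d`, where `r` is the rank of the reduction and `d ≤ dim 𝒫⃗`,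
and hence `r > 1` as soon as `k > 2 ^ dim 𝒫⃗`. -/

section UltrametricSplit

variable {X α : Type*} [PartialOrder α]

/-- `β : X → X → α` is a symmetric ultrametric with values in the partial order `α`. The diagonal
values are irrelevant, and the ultrametric inequality is a disjunction because `α` need not have
suprema. -/
structure IsUltrametric (β : X → X → α) : Prop where
  symm : ∀ i j, β i j = β j i
  le_or_le : ∀ i j l, i ≠ j → β i j ≤ β i l ∨ β i j ≤ β l j

theorem IsUltrametric.le_of_eq_of_eq {β : X → X → α} (hβ : IsUltrametric β) {i j l : X} {b : α}
    (hij : i ≠ j) (hi : β i l = b) (hj : β j l = b) : β i j ≤ b :=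
  (hβ.le_or_le i j l hij).elim (·.trans hi.le) (·.trans ((hβ.symm l j).trans hj).le)

theorem IsUltrametric.exists_split {β : X → X → α} (hβ : IsUltrametric β) {Q : Finset X}
    (hQ : Q.Nontrivial) :
    ∃ Q₁ Q₂ : Finset X, ∃ b : α, Q₁.Nonempty ∧ Q₂.Nonempty ∧ Disjoint Q₁ Q₂ ∧ Q₁ ∪ Q₂ = Q ∧
      (∀ i ∈ Q₁, ∀ j ∈ Q₂, β i j = b) ∧ (Q : Set X).Pairwise (β · · ≤ b) := by
  obtain ⟨x, hx, y, hy, hxy⟩ := hQ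
  obtain ⟨⟨i₀, j₀⟩, hmem, hmax⟩ := Q.offDiag.exists_maximalFor (fun p => β p.1 p.2)
    ⟨(x, y), Finset.mem_offDiag.2 ⟨hx, hy, hxy⟩⟩
  obtain ⟨hi₀, hj₀, hne⟩ := Finset.mem_offDiag.1 hmem
  set b := β i₀ j₀ with hb
  let near : X → Prop := fun i => i = i₀ ∨ β i₀ i ≠ b
  have eq_of_le {i j} (hi : i ∈ Q) (hj : j ∈ Q) (hij : i ≠ j) (hle : b ≤ β i j) : β i j = b :=
    (hmax (j := (i, j)) (Finset.mem_offDiag.2 ⟨hi, hj, hij⟩) hle).antisymm hle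
  have cross : ∀ i ∈ Q, near i → ∀ j ∈ Q, ¬ near j → β i j = b := by
    intro i hi hin j hj hjn
    obtain ⟨hji₀, hjb⟩ : j ≠ i₀ ∧ β i₀ j = b := by simpa [near] using hjn
    by_cases hii₀ : i = i₀
    · rwa [hii₀]
    have hib : β i₀ i ≠ b := hin.resolve_left hii₀
    refine eq_of_le hi hj (fun h => hjn (h ▸ hin)) ?_
    exact hjb ▸ (hβ.le_or_le i₀ j i hji₀.symm).resolve_left fun hle =>
      hib (eq_of_le hi₀ hi (Ne.symm hii₀) (hjb ▸ hle))
  have hi₀near : near i₀ := Or.inl rfl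
  have hj₀far : ¬ near j₀ := by simp [near, hne.symm, hb]
  refine ⟨Q.filter near, Q.filter (¬ near ·), b, ⟨i₀, by simp [hi₀, hi₀near]⟩,
    ⟨j₀, by simp [hj₀, hj₀far]⟩, Finset.disjoint_filter_filter_not _ _ _,
    Finset.filter_union_filter_not_eq _ _, ?_, ?_⟩
  · intro i hi j hj
    rw [Finset.mem_filter] at hi hj
    exact cross i hi.1 hi.2 j hj.1 hj.2
  · intro i hi j hj hij
    by_cases hin : near i <;> by_cases hjn : near j
    · exact hβ.le_of_eq_of_eq hij (cross i hi hin j₀ hj₀ hj₀far) (cross j hj hjn j₀ hj₀ hj₀far)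
    · exact (cross i hi hin j hj hjn).le
    · exact ((hβ.symm i j).trans (cross j hj hjn i hi hin)).le
    · exact hβ.le_of_eq_of_eq hij ((hβ.symm i i₀).trans (cross i₀ hi₀ hi₀near i hi hin))
        ((hβ.symm j i₀).trans (cross i₀ hi₀ hi₀near j hj hjn))

end UltrametricSplit

section Trade

instance instRingHomSurjectiveResidue {R : Type*} [CommRing R] [IsLocalRing R] :
    RingHomSurjective (IsLocalRing.residue R) :=
  ⟨IsLocalRing.residue_surjective⟩

theorem exists_linearIndependent_mod {k E : Type*} [Field k] [AddCommGroup E] [Module k E]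
    [FiniteDimensional k E] {P R : Submodule k E} (hPR : P ≤ R) :
    ∃ d : ℕ, d + Module.finrank k P = Module.finrank k R ∧ ∃ e : Fin d → E,
      (∀ j, e j ∈ R) ∧ ∀ r : Fin d → k, ∑ j, r j • e j ∈ P → r = 0 := by
  let q := P.submoduleOf R
  let b := Module.finBasis k (R ⧸ q)
  choose e he using fun j => q.mkQ_surjective (b j)
  refine ⟨_, ?_, fun j => (e j : E), fun j => (e j).2, fun r hr => ?_⟩
  · rw [← (Submodule.submoduleOfEquivOfLe hPR).finrank_eq]
    exact q.finrank_quotient_add_finrank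
  · have hsum : ∑ j, r j • b j = 0 := by
      simp_rw [← he, ← map_smul, ← map_sum]
      rw [Submodule.mkQ_apply, Submodule.Quotient.mk_eq_zero]
      simpa [q, Submodule.submoduleOf] using hr
    exact funext (Fintype.linearIndependent_iff.1 b.linearIndependent r hsum)

variable {K : Type*} [Field K] {O : ValuationSubring K}

theorem exists_inv_mul_mem_valuationSubring {J : Type*} [Finite J] {a : J → K} (ha : a ≠ 0) :
    ∃ j₀, a j₀ ≠ 0 ∧ ∀ j, (a j₀)⁻¹ * a j ∈ O := by
  obtain ⟨j₁, hj₁⟩ := Function.ne_iff.1 ha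
  have : Nonempty J := ⟨j₁⟩
  obtain ⟨j₀, hj₀⟩ := Finite.exists_max fun j => O.valuation (a j)
  have hne : a j₀ ≠ 0 := fun h => hj₁ <| by simpa [h] using hj₀ j₁
  refine ⟨j₀, hne, fun j => (O.valuation_le_one_iff _).1 ?_⟩
  rw [map_mul, map_inv₀]
  exact inv_mul_le_one_of_le₀ (hj₀ j) zero_le

variable {A E U : Type*} [AddCommGroup A] [Module O A]
  [AddCommGroup E] [Module (IsLocalRing.ResidueField O) E] [AddCommGroup U] [Module K U]
  {ρ : A →ₛₗ[IsLocalRing.residue O] E} {σ : A →ₗ[O] U}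
  {N N' : Submodule O U} {M : Submodule O A} {W : Submodule K U} {J : Type*} [Fintype J]
  {c : J → A}

theorem residue_eq_zero_of_sum_add_mem (hN : N ≤ N') (hM : M ≤ N'.comap σ)
    (hW : W.restrictScalars O ⊓ N' ≤ (M ⊓ LinearMap.ker ρ).map σ) (hc : ∀ j, c j ∈ M)
    (hind : ∀ r : J → IsLocalRing.ResidueField O,
      ∑ j, r j • ρ (c j) ∈ (M ⊓ N.comap σ).map ρ → r = 0)
    (a : J → O) {w : U} (hw : w ∈ W) (h : ∑ j, a j • σ (c j) + w ∈ N) :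
    (∀ j, IsLocalRing.residue O (a j) = 0) ∧
      ∑ j, a j • σ (c j) + w ∈ (M ⊓ N.comap σ ⊓ LinearMap.ker ρ).map σ := by
  set s := ∑ j, a j • c j with hs
  have hsM : s ∈ M := M.sum_mem fun j _ => M.smul_mem _ (hc j)
  have hσs : σ s = ∑ j, a j • σ (c j) := by simp [hs]
  rw [← hσs] at h ⊢
  have hwN' : w ∈ N' := by simpa using N'.sub_mem (hN h) (hM hsM)
  obtain ⟨t, ⟨htM, htρ : ρ t = 0⟩, rfl⟩ := hW ⟨hw, hwN'⟩
  rw [← map_add] at h ⊢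
  have hst : s + t ∈ M ⊓ N.comap σ := ⟨M.add_mem hsM htM, h⟩
  have hρ : ρ (s + t) = ∑ j, IsLocalRing.residue O (a j) • ρ (c j) := by
    simp [hs, htρ, map_smulₛₗ]
  have hzero := hind _ (hρ ▸ Submodule.mem_map_of_mem hst)
  refine ⟨congrFun hzero, Submodule.mem_map_of_mem ⟨hst, ?_⟩⟩
  refine hρ.trans (Finset.sum_eq_zero fun j _ => by rw [congrFun hzero j, Pi.zero_apply, zero_smul])

theorem inv_smul_sum_add_notMem (hN : N ≤ N') (hM : M ≤ N'.comap σ)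
    (hW : W.restrictScalars O ⊓ N' ≤ (M ⊓ LinearMap.ker ρ).map σ) (hc : ∀ j, c j ∈ M)
    (hind : ∀ r : J → IsLocalRing.ResidueField O,
      ∑ j, r j • ρ (c j) ∈ (M ⊓ N.comap σ).map ρ → r = 0)
    {a : J → K} {w : U} (hw : w ∈ W) {j₀ : J} (hj₀ : a j₀ ≠ 0)
    (hO : ∀ j, (a j₀)⁻¹ * a j ∈ O) : (a j₀)⁻¹ • (∑ j, a j • σ (c j) + w) ∉ N := by
  intro h
  rw [smul_add, Finset.smul_sum] at h
  simp_rw [smul_smul] at h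
  have := (residue_eq_zero_of_sum_add_mem hN hM hW hc hind (fun j => ⟨_, hO j⟩)
    (W.smul_mem _ hw) h).1 j₀
  have hone : (⟨(a j₀)⁻¹ * a j₀, hO j₀⟩ : O) = 1 := Subtype.ext (inv_mul_cancel₀ hj₀)
  rw [hone, map_one] at this
  exact one_ne_zero this

/- `W'` is spanned by `W` and the images under `σ` of weights whose reductions form a basis of
`M.map ρ` modulo `(M ⊓ N.comap σ).map ρ`. -/
theorem exists_finrank_add_finrank_map_eq [FiniteDimensional K U]
    [FiniteDimensional (IsLocalRing.ResidueField O) E] (hN : N ≤ N') (hM : M ≤ N'.comap σ)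
    (hW : W.restrictScalars O ⊓ N' ≤ (M ⊓ LinearMap.ker ρ).map σ) :
    ∃ W' : Submodule K U,
      Module.finrank K W' + Module.finrank (IsLocalRing.ResidueField O) ((M ⊓ N.comap σ).map ρ) =
        Module.finrank K W + Module.finrank (IsLocalRing.ResidueField O) (M.map ρ) ∧
      W'.restrictScalars O ⊓ N ≤ (M ⊓ N.comap σ ⊓ LinearMap.ker ρ).map σ := by
  obtain ⟨d, hd, e, heM, hind⟩ := exists_linearIndependent_mod
    (Submodule.map_mono (f := ρ) (inf_le_left : M ⊓ N.comap σ ≤ M))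
  choose c hc hce using heM
  obtain rfl : (fun j => ρ (c j)) = e := funext hce
  let f : (Fin d → K) × W →ₗ[K] U :=
    (Fintype.linearCombination K fun j => σ (c j)).coprod W.subtype
  have hf (a : Fin d → K) (w : W) : f (a, w) = ∑ j, a j • σ (c j) + w := by
    simp [f, Fintype.linearCombination_apply]
  have hinj : Function.Injective f := by
    refine (injective_iff_map_eq_zero f).2 fun ⟨a, w⟩ haw => ?_
    by_cases ha : a = 0
    · subst ha
      simpa [hf] using haw
    obtain ⟨j₀, hj₀, hO⟩ := exists_inv_mul_mem_valuationSubring (O := O) ha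
    refine absurd ?_ (inv_smul_sum_add_notMem hN hM hW hc hind w.2 hj₀ hO)
    rw [← hf, haw, smul_zero]
    exact N.zero_mem
  refine ⟨LinearMap.range f, ?_, ?_⟩
  · rw [LinearMap.finrank_range_of_inj hinj, Module.finrank_prod, Module.finrank_fin_fun, ← hd]
    omega
  · rintro _ ⟨⟨⟨a, w⟩, rfl⟩, hN'⟩
    rw [hf] at hN' ⊢
    have haO (j : Fin d) : a j ∈ O := by
      by_contra hj
      obtain ⟨j₀, hj₀, hO⟩ := exists_inv_mul_mem_valuationSubring (O := O) (a := a)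
        fun h => hj (by simp [h])
      refine inv_smul_sum_add_notMem hN hM hW hc hind w.2 hj₀ hO (N.smul_mem ⟨(a j₀)⁻¹, ?_⟩ hN')
      refine (O.mem_or_inv_mem (a j₀)).resolve_left fun hmem => hj ?_
      simpa [mul_inv_cancel_left₀ hj₀] using mul_mem hmem (hO j)
    exact (residue_eq_zero_of_sum_add_mem hN hM hW hc hind (fun j => ⟨a j, haO j⟩) w.2 hN').2

end Trade

section Weights

variable {K V X : Type*} [Field K] {O : ValuationSubring K} [AddCommGroup V] [Module K V]

/-- Coordinatewise reduction of `O`-valued weights modulo the maximal ideal. -/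
def residuePi (O : ValuationSubring K) (X : Type*) :
    (X → O) →ₛₗ[IsLocalRing.residue O] (X → IsLocalRing.ResidueField O) where
  toFun c i := IsLocalRing.residue O (c i)
  map_add' _ _ := funext fun _ => map_add _ _ _
  map_smul' _ _ := funext fun _ => map_mul _ _ _

@[simp]
theorem residuePi_apply (c : X → O) (i : X) : residuePi O X c i = IsLocalRing.residue O (c i) :=
  rfl

/-- The dimension over the residue field of the reduction of a module of weights. -/
def residueRank (M : Submodule O (X → O)) : ℕ :=
  Module.finrank (IsLocalRing.ResidueField O) (M.map (residuePi O X))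

theorem residueRank_mono [Finite X] {M M' : Submodule O (X → O)} (h : M ≤ M') :
    residueRank M ≤ residueRank M' :=
  Submodule.finrank_mono (Submodule.map_mono h)

theorem residueRank_sup_of_disjoint [Finite X] {M₁ M₂ : Submodule O (X → O)} {Q₁ Q₂ : Set X}
    (h₁ : ∀ c ∈ M₁, Function.support c ⊆ Q₁) (h₂ : ∀ c ∈ M₂, Function.support c ⊆ Q₂)
    (hQ : Disjoint Q₁ Q₂) : residueRank (M₁ ⊔ M₂) = residueRank M₁ + residueRank M₂ := by
  have hdisj : M₁.map (residuePi O X) ⊓ M₂.map (residuePi O X) = ⊥ := by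
    refine eq_bot_iff.2 ?_
    rintro _ ⟨⟨c₁, hc₁, rfl⟩, c₂, hc₂, heq⟩
    refine (Submodule.mem_bot _).2 (funext fun i => ?_)
    by_cases hi : i ∈ Q₁
    · have : c₂ i = 0 := Function.notMem_support.1 fun h => hQ.notMem_of_mem_left hi (h₂ _ hc₂ h)
      rw [← heq, residuePi_apply, this, map_zero, Pi.zero_apply]
    · have : c₁ i = 0 := Function.notMem_support.1 fun h => hi (h₁ _ hc₁ h)
      rw [residuePi_apply, this, map_zero, Pi.zero_apply]
  rw [residueRank, Submodule.map_sup, residueRank, residueRank,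
    ← Submodule.finrank_sup_add_finrank_inf_eq, hdisj, finrank_bot, add_zero]

/-- The functionals on `V` that are integral on the `O`-lattice `B`. -/
def dualLattice (B : Submodule O V) : Submodule O (Module.Dual K V) where
  carrier := {w | ∀ v ∈ B, w v ∈ O}
  add_mem' hw hw' v hv := add_mem (hw v hv) (hw' v hv)
  zero_mem' _ _ := zero_mem _
  smul_mem' a _ hw v hv := mul_mem a.2 (hw v hv)

theorem dualLattice_anti {B B' : Submodule O V} (h : B ≤ B') : dualLattice B' ≤ dualLattice B :=
  fun _ hw v hv => hw v (h hv)

/-- The fields `P : X → V` that on `Q` are bounded by the lattice `B` and whose differences are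
bounded by the lattices `β i j`. -/
def fieldLattice (β : X → X → Submodule O V) (Q : Finset X) (B : Submodule O V) :
    Set (X → V) :=
  {P | (∀ i ∈ Q, P i ∈ B) ∧ ∀ i ∈ Q, ∀ j ∈ Q, P i - P j ∈ β i j}

/-- The functional `v ↦ Φ (i ↦ c i • v)` on `V`, as a function of the weight `c`. -/
def weightSum (Φ : (X → V) →ₗ[K] K) : (X → O) →ₗ[O] Module.Dual K V where
  toFun c := Φ ∘ₗ LinearMap.pi fun i => (c i : K) • LinearMap.id
  map_add' c c' := LinearMap.ext fun v => by
    simp only [LinearMap.comp_apply, LinearMap.add_apply, ← map_add]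
    exact congrArg Φ (funext fun i => add_smul (c i : K) (c' i) v)
  map_smul' a c := LinearMap.ext fun v => by
    change Φ (fun i => ((a * c i : O) : K) • v) = (a : K) • Φ (fun i => (c i : K) • v)
    rw [← map_smul]
    exact congrArg Φ (funext fun i => mul_smul (a : K) (c i) v)

theorem weightSum_apply (Φ : (X → V) →ₗ[K] K) (c : X → O) (v : V) :
    weightSum Φ c v = Φ (c • fun _ => v) :=
  rfl

/-- The weights `c` supported on `Q` for which `P ↦ Φ (c • P)` is integral on
`fieldLattice β Q B`. -/
def admissible (β : X → X → Submodule O V) (Φ : (X → V) →ₗ[K] K) (Q : Finset X)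
    (B : Submodule O V) : Submodule O (X → O) where
  carrier := {c | Function.support c ⊆ Q ∧ ∀ P ∈ fieldLattice β Q B, Φ (c • P) ∈ O}
  add_mem' {c c'} hc hc' := by
    refine ⟨(Function.support_add c c').trans (Set.union_subset hc.1 hc'.1), fun P hP => ?_⟩
    rw [add_smul, map_add]
    exact add_mem (hc.2 P hP) (hc'.2 P hP)
  zero_mem' := ⟨by simp, fun P _ => by simp⟩
  smul_mem' a c hc := by
    refine ⟨(Function.support_const_smul_subset a c).trans hc.1, fun P hP => ?_⟩
    have : (a • c) • P = (a : K) • (c • P) := funext fun i => mul_smul (a : K) (c i) (P i)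
    rw [this, map_smul]
    exact mul_mem a.2 (hc.2 P hP)

variable {β : X → X → Submodule O V} {Φ : (X → V) →ₗ[K] K} {Q Q₁ Q₂ : Finset X}
  {b B : Submodule O V}

theorem weightSum_mem_dualLattice {c : X → O} (hc : c ∈ admissible β Φ Q B) :
    weightSum Φ c ∈ dualLattice B :=
  fun v hv => hc.2 (fun _ => v) ⟨fun _ _ => hv, fun i _ j _ => by simp⟩

theorem indicator_mem_fieldLattice (hsymm : ∀ i j, β i j = β j i) (hbB : b ≤ B)
    (hcross : ∀ i ∈ Q₁, ∀ j ∈ Q₂, β i j = b) {P : X → V} (hP : P ∈ fieldLattice β Q₁ b) :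
    (Q₁ : Set X).indicator P ∈ fieldLattice β (Q₁ ∪ Q₂) B := by
  constructor
  · intro i _
    by_cases hi₁ : i ∈ Q₁
    · simpa [hi₁] using hbB (hP.1 i hi₁)
    · simp [hi₁]
  · intro i hi j hj
    by_cases hi₁ : i ∈ Q₁ <;> by_cases hj₁ : j ∈ Q₁
    · simpa [hi₁, hj₁] using hP.2 i hi₁ j hj₁
    · have hj₂ : j ∈ Q₂ := (Finset.mem_union.1 hj).resolve_left hj₁
      simpa [hi₁, hj₁, hcross i hi₁ j hj₂] using hP.1 i hi₁
    · have hi₂ : i ∈ Q₂ := (Finset.mem_union.1 hi).resolve_left hi₁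
      simpa [hi₁, hj₁, hsymm i j, hcross j hj₁ i hi₂] using hP.1 j hj₁
    · simp [hi₁, hj₁]

theorem indicator_mem_admissible (hsymm : ∀ i j, β i j = β j i) (hbB : b ≤ B)
    (hcross : ∀ i ∈ Q₁, ∀ j ∈ Q₂, β i j = b) {c : X → O}
    (hc : c ∈ admissible β Φ (Q₁ ∪ Q₂) B) :
    (Q₁ : Set X).indicator c ∈ admissible β Φ Q₁ b := by
  refine ⟨Set.support_indicator_subset, fun P hP => ?_⟩
  have hmove : (Q₁ : Set X).indicator c • P = c • (Q₁ : Set X).indicator P := by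
    ext i
    by_cases hi : i ∈ Q₁ <;> simp [hi]
  rw [hmove]
  exact hc.2 _ (indicator_mem_fieldLattice hsymm hbB hcross hP)

theorem mem_admissible_of_mem_sup (hQ : Q.Nonempty)
    (hβ : (Q : Set X).Pairwise (β · · ≤ b)) (hQ₁ : Q₁ ⊆ Q) (hQ₂ : Q₂ ⊆ Q) {c : X → O}
    (hc : c ∈ admissible β Φ Q₁ b ⊔ admissible β Φ Q₂ b)
    (hsum : weightSum Φ c ∈ dualLattice B) : c ∈ admissible β Φ Q B := by
  obtain ⟨c₁, hc₁, c₂, hc₂, rfl⟩ := Submodule.mem_sup.1 hc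
  refine ⟨(Function.support_add c₁ c₂).trans (Set.union_subset
    (hc₁.1.trans (Finset.coe_subset.2 hQ₁)) (hc₂.1.trans (Finset.coe_subset.2 hQ₂))),
    fun P hP => ?_⟩
  obtain ⟨z, hz⟩ := hQ
  have htranslate : ∀ R ⊆ Q, (P - fun _ => P z) ∈ fieldLattice β R b := by
    refine fun R hR => ⟨fun i hi => ?_, fun i hi j hj => by simpa using hP.2 i (hR hi) j (hR hj)⟩
    obtain rfl | hiz := eq_or_ne i z
    · simp
    · exact hβ (hR hi) hz hiz (hP.2 i (hR hi) z hz)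
  have hdecomp : Φ ((c₁ + c₂) • P) = Φ (c₁ • (P - fun _ => P z)) + Φ (c₂ • (P - fun _ => P z)) +
      weightSum Φ (c₁ + c₂) (P z) := by
    rw [weightSum_apply, ← map_add, ← map_add, ← add_smul, ← smul_add, sub_add_cancel]
  rw [hdecomp]
  exact add_mem (add_mem (hc₁.2 _ (htranslate Q₁ hQ₁)) (hc₂.2 _ (htranslate Q₂ hQ₂)))
    (hsum _ (hP.1 z hz))

theorem admissible_union (hsymm : ∀ i j, β i j = β j i) (hdisj : Disjoint Q₁ Q₂)
    (hne : Q₁.Nonempty) (hbB : b ≤ B) (hcross : ∀ i ∈ Q₁, ∀ j ∈ Q₂, β i j = b)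
    (hβ : ((Q₁ ∪ Q₂ : Finset X) : Set X).Pairwise (β · · ≤ b)) :
    admissible β Φ (Q₁ ∪ Q₂) B =
      (admissible β Φ Q₁ b ⊔ admissible β Φ Q₂ b) ⊓ (dualLattice B).comap (weightSum Φ) := by
  have hQ₁ : Q₁ ⊆ Q₁ ∪ Q₂ := Finset.subset_union_left
  refine le_antisymm (fun c hc => ⟨?_, weightSum_mem_dualLattice hc⟩) fun c hc =>
    mem_admissible_of_mem_sup (hne.mono hQ₁) hβ hQ₁ Finset.subset_union_right hc.1 hc.2
  have hsplit : (Q₁ : Set X).indicator c + (Q₂ : Set X).indicator c = c := by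
    refine (Set.indicator_union_of_disjoint (Finset.disjoint_coe.2 hdisj) c).symm.trans ?_
    rw [← Finset.coe_union, Set.indicator_eq_self.2 hc.1]
  rw [← hsplit]
  exact Submodule.add_mem_sup (indicator_mem_admissible hsymm hbB hcross hc)
    (indicator_mem_admissible hsymm hbB
      (fun i hi j hj => (hsymm i j).trans (hcross j hj i hi)) (Finset.union_comm Q₁ Q₂ ▸ hc))

theorem indicator_one_mem_admissible (hsymm : ∀ i j, β i j = β j i) (hbB : b ≤ B)
    (hcross : ∀ i ∈ Q₁, ∀ j ∈ Q₂, β i j = b)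
    (h1 : ((Q₁ ∪ Q₂ : Finset X) : Set X).indicator 1 ∈ admissible β Φ (Q₁ ∪ Q₂) B) :
    (Q₁ : Set X).indicator 1 ∈ admissible β Φ Q₁ b := by
  have h := indicator_mem_admissible hsymm hbB hcross h1
  rwa [Set.indicator_indicator, ← Finset.coe_inter,
    Finset.inter_eq_left.2 Finset.subset_union_left] at h

theorem residueRank_admissible_pos [Finite X] (hQ : Q.Nonempty)
    (h1 : (Q : Set X).indicator 1 ∈ admissible β Φ Q B) :
    0 < residueRank (admissible β Φ Q B) := by
  obtain ⟨i, hi⟩ := hQ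
  rw [residueRank, Module.finrank_pos_iff_exists_ne_zero]
  refine ⟨⟨_, Submodule.mem_map_of_mem h1⟩, fun h => ?_⟩
  have := congrFun (congrArg Subtype.val h) i
  simp [hi] at this

/- A split of the tree keeps the larger of the two exponents `d`, and each unit by which the rank
drops below `r₁ + r₂` raises it by one. -/
theorem add_le_mul_two_pow {p₁ p₂ r₁ r₂ r d d' : ℕ} (h₁ : p₁ ≤ r₁ * 2 ^ d)
    (h₂ : p₂ ≤ r₂ * 2 ^ d) (hr : 0 < r) (hle : r ≤ r₁ + r₂) (heq : d' + r = d + (r₁ + r₂)) :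
    p₁ + p₂ ≤ r * 2 ^ d' := by
  obtain ⟨e, he⟩ := Nat.exists_eq_add_of_le hle
  obtain rfl : d' = d + e := by omega
  have hexp : r + e ≤ r * 2 ^ e := by nlinarith [Nat.lt_two_pow_self (n := e)]
  calc p₁ + p₂ ≤ (r₁ + r₂) * 2 ^ d := by rw [add_mul]; exact add_le_add h₁ h₂
    _ ≤ r * 2 ^ e * 2 ^ d := he ▸ Nat.mul_le_mul_right _ hexp
    _ = r * 2 ^ (d + e) := by ring

theorem exists_le_residueRank_sup_mul [Finite X] [FiniteDimensional K V] (hbB : b ≤ B)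
    (hdisj : Disjoint Q₁ Q₂) {M : Submodule O (X → O)} (hM : 0 < residueRank M)
    (hMeq : M = (admissible β Φ Q₁ b ⊔ admissible β Φ Q₂ b) ⊓ (dualLattice B).comap (weightSum Φ))
    {W₁ W₂ : Submodule K (Module.Dual K V)}
    (h₁ : Q₁.card ≤ residueRank (admissible β Φ Q₁ b) * 2 ^ Module.finrank K W₁)
    (h₂ : Q₂.card ≤ residueRank (admissible β Φ Q₂ b) * 2 ^ Module.finrank K W₂)
    (hW₁ : W₁.restrictScalars O ⊓ dualLattice b ≤
      (admissible β Φ Q₁ b ⊓ LinearMap.ker (residuePi O X)).map (weightSum Φ))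
    (hW₂ : W₂.restrictScalars O ⊓ dualLattice b ≤
      (admissible β Φ Q₂ b ⊓ LinearMap.ker (residuePi O X)).map (weightSum Φ)) :
    ∃ W : Submodule K (Module.Dual K V),
      Q₁.card + Q₂.card ≤ residueRank M * 2 ^ Module.finrank K W ∧
      W.restrictScalars O ⊓ dualLattice B ≤
        (M ⊓ LinearMap.ker (residuePi O X)).map (weightSum Φ) := by
  set M₁ := admissible β Φ Q₁ b
  set M₂ := admissible β Φ Q₂ b
  obtain ⟨W₀, hle₁, hle₂, hW₀⟩ : ∃ W₀ : Submodule K (Module.Dual K V),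
      Module.finrank K W₁ ≤ Module.finrank K W₀ ∧ Module.finrank K W₂ ≤ Module.finrank K W₀ ∧
      W₀.restrictScalars O ⊓ dualLattice b ≤
        ((M₁ ⊔ M₂) ⊓ LinearMap.ker (residuePi O X)).map (weightSum Φ) := by
    obtain h | h := le_total (Module.finrank K W₁) (Module.finrank K W₂)
    · exact ⟨W₂, h, le_rfl, hW₂.trans (Submodule.map_mono (inf_le_inf_right _ le_sup_right))⟩
    · exact ⟨W₁, le_rfl, h, hW₁.trans (Submodule.map_mono (inf_le_inf_right _ le_sup_left))⟩
  have hsum : M₁ ⊔ M₂ ≤ (dualLattice b).comap (weightSum Φ) :=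
    sup_le (fun _ => weightSum_mem_dualLattice) fun _ => weightSum_mem_dualLattice
  obtain ⟨W, hWrank, hW⟩ := exists_finrank_add_finrank_map_eq (dualLattice_anti hbB) hsum hW₀
  have hrank : residueRank (M₁ ⊔ M₂) = residueRank M₁ + residueRank M₂ :=
    residueRank_sup_of_disjoint (fun _ hc => hc.1) (fun _ hc => hc.1)
      (Finset.disjoint_coe.2 hdisj)
  rw [← hMeq] at hW hWrank
  change _ + residueRank M = _ + residueRank (M₁ ⊔ M₂) at hWrank
  have hmono : residueRank M ≤ residueRank M₁ + residueRank M₂ :=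
    hrank ▸ residueRank_mono (hMeq.trans_le inf_le_left)
  refine ⟨W, add_le_mul_two_pow (h₁.trans ?_) (h₂.trans ?_) hM hmono (hrank ▸ hWrank), hW⟩
  · exact Nat.mul_le_mul_left _ (Nat.pow_le_pow_right two_pos hle₁)
  · exact Nat.mul_le_mul_left _ (Nat.pow_le_pow_right two_pos hle₂)

theorem IsUltrametric.exists_card_le_residueRank_mul [Finite X] [FiniteDimensional K V]
    (hβ : IsUltrametric β) (Q : Finset X) (hQ : Q.Nonempty) (B : Submodule O V)
    (hB : (Q : Set X).Pairwise (β · · ≤ B))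
    (h1 : (Q : Set X).indicator 1 ∈ admissible β Φ Q B) :
    ∃ W : Submodule K (Module.Dual K V),
      Q.card ≤ residueRank (admissible β Φ Q B) * 2 ^ Module.finrank K W ∧
      W.restrictScalars O ⊓ dualLattice B ≤
        (admissible β Φ Q B ⊓ LinearMap.ker (residuePi O X)).map (weightSum Φ) := by
  induction Q using Finset.strongInduction generalizing B with
  | H Q ih =>
  have hpos := residueRank_admissible_pos hQ h1
  obtain ⟨x, rfl⟩ | hQnt := hQ.exists_eq_singleton_or_nontrivial
  · refine ⟨⊥, by simpa using Nat.one_le_iff_ne_zero.2 hpos.ne', fun w hw => ?_⟩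
    obtain rfl : w = 0 := hw.1
    exact zero_mem _
  obtain ⟨Q₁, Q₂, b, hne₁, hne₂, hdisj, rfl, hcross, hb⟩ := hβ.exists_split hQnt
  obtain ⟨⟨i, hi⟩, j, hj⟩ := And.intro hne₁ hne₂
  have hQ₁ : Q₁ ⊆ Q₁ ∪ Q₂ := Finset.subset_union_left
  have hQ₂ : Q₂ ⊆ Q₁ ∪ Q₂ := Finset.subset_union_right
  have hbB : b ≤ B := hcross i hi j hj ▸
    hB (hQ₁ hi) (hQ₂ hj) fun h => Finset.disjoint_left.1 hdisj hi (h ▸ hj)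
  have hcross' : ∀ i ∈ Q₂, ∀ j ∈ Q₁, β i j = b := fun i hi j hj =>
    (hβ.symm i j).trans (hcross j hj i hi)
  have hss₁ : Q₁ ⊂ Q₁ ∪ Q₂ := hQ₁.ssubset_of_not_subset fun h =>
    Finset.disjoint_left.1 hdisj (h (hQ₂ hj)) hj
  have hss₂ : Q₂ ⊂ Q₁ ∪ Q₂ := hQ₂.ssubset_of_not_subset fun h =>
    Finset.disjoint_left.1 hdisj hi (h (hQ₁ hi))
  obtain ⟨W₁, hcard₁, hW₁⟩ := ih Q₁ hss₁ hne₁ b (hb.mono (Finset.coe_subset.2 hQ₁))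
    (indicator_one_mem_admissible hβ.symm hbB hcross h1)
  obtain ⟨W₂, hcard₂, hW₂⟩ := ih Q₂ hss₂ hne₂ b (hb.mono (Finset.coe_subset.2 hQ₂))
    (indicator_one_mem_admissible hβ.symm hbB hcross' (Finset.union_comm Q₁ Q₂ ▸ h1))
  rw [Finset.card_union_of_disjoint hdisj]
  exact exists_le_residueRank_sup_mul hbB hdisj hpos
    (admissible_union hβ.symm hdisj hne₁ hbB hcross hb) hcard₁ hcard₂ hW₁ hW₂

theorem IsUltrametric.exists_admissible_isUnit_sub [Fintype X] [FiniteDimensional K V]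
    (hβ : IsUltrametric β) (hcard : 2 ^ Module.finrank K V < Fintype.card X)
    (hΦ : ∀ P : X → V, (∀ i j, P i - P j ∈ β i j) → Φ P ∈ O) :
    ∃ c : X → O, (∀ P : X → V, (∀ i j, P i - P j ∈ β i j) → Φ (c • P) ∈ O) ∧
      ∃ i j, IsUnit (c i - c j) := by
  set M := admissible β Φ Finset.univ ⊤
  have h1 : ((Finset.univ : Finset X) : Set X).indicator 1 ∈ M := by
    refine ⟨Set.support_indicator_subset, fun P hP => ?_⟩
    simpa using hΦ P fun i j => hP.2 i (Finset.mem_univ i) j (Finset.mem_univ j)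
  have hne : (Finset.univ : Finset X).Nonempty :=
    Finset.card_pos.1 ((Nat.zero_le _).trans_lt hcard)
  obtain ⟨W, hW, -⟩ := hβ.exists_card_le_residueRank_mul Finset.univ hne ⊤
    (fun _ _ _ _ _ => le_top) h1
  have hWV : Module.finrank K W ≤ Module.finrank K V :=
    (Submodule.finrank_le W).trans Subspace.dual_finrank_eq.le
  have hrank : 1 < residueRank M := by
    by_contra! hle
    refine hcard.not_ge (hW.trans ?_)
    exact (Nat.mul_le_mul hle (Nat.pow_le_pow_right two_pos hWV)).trans (one_mul _).le
  obtain ⟨i₀, -⟩ := hne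
  by_contra! hcon
  have hconst : M.map (residuePi O X) ≤
      Submodule.span (IsLocalRing.ResidueField O) {(1 : X → IsLocalRing.ResidueField O)} := by
    rintro _ ⟨c, hc, rfl⟩
    refine Submodule.mem_span_singleton.2 ⟨IsLocalRing.residue O (c i₀), funext fun i => ?_⟩
    have hnonunit := hcon c (fun P hP => hc.2 P ⟨fun _ _ => trivial, fun i _ j _ => hP i j⟩) i₀ i
    rw [← IsLocalRing.residue_ne_zero_iff_isUnit, not_not, map_sub, sub_eq_zero] at hnonunit
    simp [hnonunit]
  exact hrank.not_ge <| (Submodule.finrank_mono hconst).trans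
    ((finrank_span_le_card _).trans_eq (by simp))

end Weights

section OrderedField

variable {K V X : Type*} [Field K] [LinearOrder K] [IsStrictOrderedRing K] {O : ValuationSubring K}
  [AddCommGroup V] [Module K V]

theorem exists_normalized_of_isUnit_sub [Finite X] (hO : (O : Set K).OrdConnected) {c : X → O}
    {i j : X} (hij : IsUnit (c i - c j)) :
    ∃ (a b : X) (γ : O), (γ : K) * (c b - c a) = 1 ∧
      ∀ i, (γ * (c i - c a) : K) ∈ Set.Icc 0 1 := by
  have : Nonempty X := ⟨i⟩
  obtain ⟨a, ha⟩ := Finite.exists_min fun i => (c i : K)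
  obtain ⟨b, hb⟩ := Finite.exists_max fun i => (c i : K)
  have hab : |(c i - c j : K)| ≤ c b - c a :=
    abs_le.2 ⟨by linarith [hb j, ha i], by linarith [hb i, ha j]⟩
  have hne : (c i - c j : K) ≠ 0 := fun h => hij.ne_zero (Subtype.ext h)
  have hpos : (0 : K) < c b - c a := (abs_pos.2 hne).trans_le hab
  have hinv : |(c i - c j : K)⁻¹| ∈ O := by
    obtain ⟨u, hu⟩ := hij.exists_right_inv
    have huK : (c i - c j : K) * u = 1 := congrArg Subtype.val hu
    rw [inv_eq_of_mul_eq_one_right huK]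
    obtain h | h := abs_choice (u : K) <;> rw [h]
    exacts [u.2, neg_mem u.2]
  have hγ : (c b - c a : K)⁻¹ ∈ O :=
    hO.out (zero_mem O) hinv ⟨inv_nonneg.2 hpos.le, by
      rw [abs_inv]; exact inv_anti₀ (abs_pos.2 hne) hab⟩
  refine ⟨a, b, ⟨_, hγ⟩, inv_mul_cancel₀ hpos.ne', fun i => ⟨?_, ?_⟩⟩
  · exact mul_nonneg (inv_nonneg.2 hpos.le) (sub_nonneg.2 (ha i))
  · exact (inv_mul_le_one₀ hpos).2 (sub_le_sub_right (hb i) _)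

theorem IsUltrametric.exists_weight [Fintype X] [FiniteDimensional K V]
    (hO : (O : Set K).OrdConnected) {β : X → X → Submodule O V} (hβ : IsUltrametric β)
    (hcard : 2 ^ Module.finrank K V < Fintype.card X) {Φ : (X → V) →ₗ[K] K}
    (hΦ : ∀ P : X → V, (∀ i j, P i - P j ∈ β i j) → Φ P ∈ O) :
    ∃ (c : X → K) (a b : X), (∀ i, c i ∈ Set.Icc 0 1) ∧ c a = 0 ∧ c b = 1 ∧
      ∀ P : X → V, (∀ i j, P i - P j ∈ β i j) → Φ (c • P) ∈ O := by
  obtain ⟨c, hc, i, j, hij⟩ := hβ.exists_admissible_isUnit_sub hcard hΦ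
  obtain ⟨a, b, γ, hγ, hIcc⟩ := exists_normalized_of_isUnit_sub hO hij
  refine ⟨fun i => γ * (c i - c a), a, b, hIcc, by simp, hγ, fun P hP => ?_⟩
  have hsplit : Φ ((fun i => (γ * (c i - c a) : K)) • P) = γ * (Φ (c • P) - c a * Φ P) := by
    rw [← smul_eq_mul, ← smul_eq_mul (c a : K), ← map_smul, ← map_sub, ← map_smul]
    refine congrArg Φ (funext fun i => ?_)
    simp only [Pi.smul_apply', Pi.smul_apply, Pi.sub_apply, mul_smul, sub_smul]
    rfl
  rw [hsplit]
  exact mul_mem γ.2 (sub_mem (hc P hP) (mul_mem (c a).2 (hΦ P hP)))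

variable (K) in
/-- The finite elements of an ordered field, that is, those bounded by a natural number. -/
def finiteElements : ValuationSubring K :=
  (ArchimedeanClass.addValuation K).toValuation.valuationSubring

theorem mem_finiteElements {x : K} : x ∈ finiteElements K ↔ ∃ r : ℕ, |x| ≤ r := by
  have : x ∈ finiteElements K ↔ ArchimedeanClass.mk 1 ≤ ArchimedeanClass.mk x := by
    rw [finiteElements, Valuation.mem_valuationSubring_iff, ArchimedeanClass.mk_one]
    rfl
  simp only [this, ArchimedeanClass.mk_le_mk, abs_one, nsmul_one]

theorem ordConnected_finiteElements : (finiteElements K : Set K).OrdConnected := by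
  refine ⟨fun x hx y hy z hz => ?_⟩
  obtain ⟨r, hr⟩ := mem_finiteElements.1 hx
  obtain ⟨s, hs⟩ := mem_finiteElements.1 hy
  refine mem_finiteElements.2 ⟨max r s, ?_⟩
  push_cast
  exact (abs_le_max_abs_abs hz.1 hz.2).trans (max_le_max hr hs)

end OrderedField

section Ultraproduct

variable {ι : Type*} {l : Ultrafilter ι} {E : Type*}

/-- The ultrapower of `E` along the ultrafilter `l`. -/
abbrev Ultrapower (l : Ultrafilter ι) (E : Type*) : Type _ :=
  Filter.Germ (l : Filter ι) E

theorem Ultrapower.coe_mem_finiteElements {u : ι → ℝ} :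
    (u : Ultrapower l ℝ) ∈ finiteElements (Ultrapower l ℝ) ↔ ∃ r : ℕ, ∀ᶠ ν in l, |u ν| ≤ r := by
  refine mem_finiteElements.trans (exists_congr fun r => ?_)
  rw [Filter.Germ.abs_def]
  exact Filter.Germ.coe_le

theorem Ultrapower.exists_coe_eq (v : Ultrapower l E) : ∃ u : ι → E, (u : Ultrapower l E) = v :=
  Quot.exists_rep v

theorem Ultrapower.coe_finset_sum [AddCommMonoid E] {κ : Type*} (s : Finset κ) (u : κ → ι → E) :
    ((∑ a ∈ s, u a : ι → E) : Ultrapower l E) = ∑ a ∈ s, (u a : Ultrapower l E) :=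
  map_sum (Filter.Germ.coeAddHom (l : Filter ι) : (ι → E) →+ Ultrapower l E) u s

section Dimension

variable {k : Type*} [Field k] [AddCommGroup E] [Module k E]

theorem Ultrapower.span_range_const_basis {κ : Type*} [Finite κ] (b : Module.Basis κ k E) :
    Submodule.span (Ultrapower l k) (Set.range fun i => ((fun _ => b i : ι → E) : Ultrapower l E))
      = ⊤ := by
  have := Fintype.ofFinite κ
  refine eq_top_iff.2 fun v _ => ?_
  obtain ⟨u, rfl⟩ := Ultrapower.exists_coe_eq v
  have hu : (u : Ultrapower l E) = ∑ i, ((fun ν => b.repr (u ν) i : ι → k) : Ultrapower l k) •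
      ((fun _ => b i : ι → E) : Ultrapower l E) := by
    refine Eq.trans (congrArg _ (funext fun ν => ?_))
      (Ultrapower.coe_finset_sum Finset.univ fun i ν => b.repr (u ν) i • b i)
    rw [Finset.sum_apply, b.sum_repr]
  rw [hu]
  exact Submodule.sum_smul_mem _ _ fun i _ => Submodule.subset_span ⟨i, rfl⟩

variable [FiniteDimensional k E]

variable (k E l) in
theorem Ultrapower.finiteDimensional : FiniteDimensional (Ultrapower l k) (Ultrapower l E) :=
  ⟨Ultrapower.span_range_const_basis (Module.finBasis k E) ▸ Submodule.fg_span (Set.finite_range _)⟩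

variable (k E l) in
theorem Ultrapower.finrank_le :
    Module.finrank (Ultrapower l k) (Ultrapower l E) ≤ Module.finrank k E := by
  rw [← finrank_top, ← Ultrapower.span_range_const_basis (Module.finBasis k E)]
  exact (finrank_range_le_card _).trans_eq (Fintype.card_fin _)

end Dimension

variable [AddCommGroup E] [Module ℝ E]

/-- The linear functional on an ultrapower induced by a family of linear functionals. -/
def ultraFunctional (l : Ultrafilter ι) (f : ι → E →ₗ[ℝ] ℝ) :
    Ultrapower l E →ₗ[Ultrapower l ℝ] Ultrapower l ℝ where
  toFun := Filter.Germ.map₂ (fun g v => g v) (f : Filter.Germ (l : Filter ι) (E →ₗ[ℝ] ℝ))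
  map_add' v w := Filter.Germ.inductionOn₂ v w fun _ _ =>
    congrArg _ (funext fun _ => map_add _ _ _)
  map_smul' a v := Filter.Germ.inductionOn₂ a v fun _ _ =>
    congrArg _ (funext fun _ => map_smul _ _ _)

/-- The vectors of an ultrapower that have finite size with respect to a family of seminorms. -/
def seminormLattice (l : Ultrafilter ι) (N : ι → Seminorm ℝ E) :
    Submodule (finiteElements (Ultrapower l ℝ)) (Ultrapower l E) where
  carrier := {v | Filter.Germ.map₂ (fun p w => p w)
    (N : Filter.Germ (l : Filter ι) (Seminorm ℝ E)) v ∈ finiteElements (Ultrapower l ℝ)}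
  add_mem' {v w} := Filter.Germ.inductionOn₂ v w fun v w hv hw => by
    obtain ⟨r, hr⟩ := Ultrapower.coe_mem_finiteElements.1 hv
    obtain ⟨s, hs⟩ := Ultrapower.coe_mem_finiteElements.1 hw
    refine Ultrapower.coe_mem_finiteElements.2 ⟨r + s, ?_⟩
    filter_upwards [hr, hs] with ν hrν hsν
    push_cast
    rw [abs_of_nonneg (apply_nonneg _ _)] at hrν hsν ⊢
    exact (map_add_le_add _ _ _).trans (add_le_add hrν hsν)
  zero_mem' := Ultrapower.coe_mem_finiteElements.2 ⟨0, by simp⟩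
  smul_mem' := by
    rintro ⟨a, ha⟩ v hv
    obtain ⟨a, rfl⟩ := Ultrapower.exists_coe_eq a
    obtain ⟨v, rfl⟩ := Ultrapower.exists_coe_eq v
    obtain ⟨r, hr⟩ := Ultrapower.coe_mem_finiteElements.1 ha
    obtain ⟨s, hs⟩ := Ultrapower.coe_mem_finiteElements.1 hv
    refine Ultrapower.coe_mem_finiteElements.2 ⟨r * s, ?_⟩
    filter_upwards [hr, hs] with ν hrν hsν
    push_cast
    change |N ν (a ν • v ν)| ≤ _
    rw [map_smul_eq_mul, abs_mul, Real.norm_eq_abs, abs_abs]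
    exact mul_le_mul hrν hsν (abs_nonneg _) (Nat.cast_nonneg _)

theorem coe_mem_seminormLattice {N : ι → Seminorm ℝ E} {u : ι → E} :
    (u : Ultrapower l E) ∈ seminormLattice l N ↔ ∃ r : ℕ, ∀ᶠ ν in l, N ν (u ν) ≤ r := by
  refine Ultrapower.coe_mem_finiteElements.trans ?_
  simp only [abs_of_nonneg (apply_nonneg (N _) _)]

theorem seminormLattice_mono {N N' : ι → Seminorm ℝ E} {C : ℝ}
    (h : ∀ᶠ ν in l, ∀ v, N' ν v ≤ C * N ν v) : seminormLattice l N ≤ seminormLattice l N' := by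
  intro v hv
  obtain ⟨u, rfl⟩ := Ultrapower.exists_coe_eq v
  obtain ⟨r, hr⟩ := coe_mem_seminormLattice.1 hv
  obtain ⟨s, hs⟩ := exists_nat_ge C
  refine coe_mem_seminormLattice.2 ⟨s * r, ?_⟩
  filter_upwards [h, hr] with ν hν hrν
  push_cast
  exact (hν _).trans (mul_le_mul hs hrν (apply_nonneg _ _) (Nat.cast_nonneg _))

theorem ultraFunctional_coe_mem_finiteElements {p : ι → Seminorm ℝ E} {f : ι → E →ₗ[ℝ] ℝ}
    (hf : ∀ ν v, |f ν v| ≤ p ν v) {u : ι → E} (hu : (u : Ultrapower l E) ∈ seminormLattice l p) :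
    ultraFunctional l f u ∈ finiteElements (Ultrapower l ℝ) := by
  obtain ⟨r, hr⟩ := coe_mem_seminormLattice.1 hu
  exact Ultrapower.coe_mem_finiteElements.2 ⟨r, hr.mono fun ν hν => (hf ν _).trans hν⟩

/-- An ultrapower of a finite power is a finite power of the ultrapower. -/
def ultrapowerPi (l : Ultrafilter ι) (X E : Type*) [Finite X] [AddCommGroup E] [Module ℝ E] :
    Ultrapower l (X → E) ≃ₗ[Ultrapower l ℝ] (X → Ultrapower l E) :=
  LinearEquiv.ofBijective
    { toFun := fun v i => Filter.Germ.map (fun w => w i) v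
      map_add' := fun v w => Filter.Germ.inductionOn₂ v w fun _ _ => rfl
      map_smul' := fun a v => Filter.Germ.inductionOn₂ a v fun _ _ => rfl }
    ⟨fun v w h => by
      obtain ⟨u, rfl⟩ := Ultrapower.exists_coe_eq v
      obtain ⟨u', rfl⟩ := Ultrapower.exists_coe_eq w
      have hcoord : ∀ᶠ ν in (l : Filter ι), ∀ i, u ν i = u' ν i :=
        Filter.eventually_all.2 fun i => Filter.Germ.coe_eq.1 (congrFun h i)
      exact Filter.Germ.coe_eq.2 (hcoord.mono fun ν hν => funext hν),
    fun v => by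
      choose u hu using fun i => Ultrapower.exists_coe_eq (v i)
      exact ⟨((fun ν i => u i ν : ι → X → E) : Ultrapower l (X → E)), funext hu⟩⟩

theorem exists_ultrapowerPi_coe_eq {X : Type*} [Finite X] (P : X → Ultrapower l E) :
    ∃ u : ι → X → E, ultrapowerPi l X E u = P := by
  obtain ⟨v, rfl⟩ := (ultrapowerPi l X E).surjective P
  obtain ⟨u, rfl⟩ := Ultrapower.exists_coe_eq v
  exact ⟨u, rfl⟩

end Ultraproduct

section RealWeights

variable {ι X E : Type*} {l : Ultrafilter ι} [AddCommGroup E] [Module ℝ E]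

/-- `N : X → X → Seminorm ℝ E` is a symmetric ultrametric up to the factor `C`. The ultrametric
inequality compares seminorms, hence is a disjunction. -/
structure IsQuasiUltrametric (C : ℝ) (N : X → X → Seminorm ℝ E) : Prop where
  one_le : 1 ≤ C
  symm : ∀ i j v, N j i v ≤ C * N i j v
  le_or_le : ∀ i j l, i ≠ j → (∀ v, N i l v ≤ C * N i j v) ∨ ∀ v, N l j v ≤ C * N i j v

theorem isUltrametric_seminormLattice {N : ι → X → X → Seminorm ℝ E} {C : ℝ}
    (hN : ∀ ν, IsQuasiUltrametric C (N ν)) :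
    IsUltrametric fun i j => seminormLattice l (N · i j) where
  symm i j := (seminormLattice_mono (.of_forall fun ν => (hN ν).symm i j)).antisymm
    (seminormLattice_mono (.of_forall fun ν => (hN ν).symm j i))
  le_or_le i j l hij := (Ultrafilter.eventually_or.1
    (.of_forall fun ν => (hN ν).le_or_le i j l hij)).imp seminormLattice_mono seminormLattice_mono

variable [Fintype X]

/-- The abstract Whitney seminorm `max_{i, j} N i j (P i - P j)` of a field `P : X → E`. -/
def pairSeminorm (N : X → X → Seminorm ℝ E) : Seminorm ℝ (X → E) :=
  Finset.univ.sup fun p : X × X =>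
    (N p.1 p.2).comp (LinearMap.proj (R := ℝ) (φ := fun _ => E) p.1 - LinearMap.proj p.2)

theorem pairSeminorm_le_iff {N : X → X → Seminorm ℝ E} {P : X → E} {M : ℝ} (hM : 0 ≤ M) :
    pairSeminorm N P ≤ M ↔ ∀ i j, N i j (P i - P j) ≤ M :=
  ⟨fun h i j => (Seminorm.le_finset_sup_apply (Finset.mem_univ (i, j))).trans h,
    fun h => Seminorm.finset_sup_apply_le hM fun p _ => h p.1 p.2⟩

theorem ultrapowerPi_sub_mem_seminormLattice_iff {N : ι → X → X → Seminorm ℝ E} {u : ι → X → E} :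
    (∀ i j, ultrapowerPi l X E u i - ultrapowerPi l X E u j ∈ seminormLattice l (N · i j)) ↔
      (u : Ultrapower l (X → E)) ∈ seminormLattice l fun ν => pairSeminorm (N ν) := by
  have hcoe {i j} : ultrapowerPi l X E u i - ultrapowerPi l X E u j ∈ seminormLattice l (N · i j) ↔
      ∃ r : ℕ, ∀ᶠ ν in l, N ν i j (u ν i - u ν j) ≤ r :=
    coe_mem_seminormLattice (u := fun ν => u ν i - u ν j)
  simp only [hcoe, coe_mem_seminormLattice, pairSeminorm_le_iff (Nat.cast_nonneg _)]
  refine ⟨fun h => ?_, fun ⟨r, hr⟩ i j => ⟨r, hr.mono fun ν hν => hν i j⟩⟩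
  choose r hr using h
  refine ⟨∑ i, ∑ j, r i j, Filter.eventually_all.2 fun i => Filter.eventually_all.2 fun j =>
    (hr i j).mono fun ν hν => hν.trans (Nat.cast_le.2 ?_)⟩
  exact (Finset.single_le_sum_of_canonicallyOrdered (f := r i) (Finset.mem_univ j)).trans
    (Finset.single_le_sum_of_canonicallyOrdered (f := fun i => ∑ j, r i j) (Finset.mem_univ i))

theorem exists_weight_of_abs_le_pairSeminorm [FiniteDimensional ℝ E]
    (hcard : 2 ^ Module.finrank ℝ E < Fintype.card X) (C : ℝ) :
    ∃ C' : ℝ, ∀ N : X → X → Seminorm ℝ E, IsQuasiUltrametric C N →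
      ∀ f : (X → E) →ₗ[ℝ] ℝ, (∀ P, |f P| ≤ pairSeminorm N P) →
      ∃ (c : X → ℝ) (a b : X), (∀ i, c i ∈ Set.Icc 0 1) ∧ c a = 0 ∧ c b = 1 ∧
        ∀ P : X → E, pairSeminorm N P ≤ 1 → |f (c • P)| ≤ C' := by
  by_contra! hcon
  choose N hN f hf hbad using fun ν : ℕ => hcon ν
  set l := Filter.hyperfilter ℕ
  have := Ultrapower.finiteDimensional l E ℝ
  obtain ⟨c, a, b, hc, hca, hcb, hfin⟩ := (isUltrametric_seminormLattice (l := l) hN).exists_weight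
    ordConnected_finiteElements
    ((Nat.pow_le_pow_right two_pos (Ultrapower.finrank_le l E ℝ)).trans_lt hcard)
    (Φ := ultraFunctional l f ∘ₗ (ultrapowerPi l X E).symm.toLinearMap) fun P hP => by
      obtain ⟨u, rfl⟩ := exists_ultrapowerPi_coe_eq P
      simpa using ultraFunctional_coe_mem_finiteElements hf
        (ultrapowerPi_sub_mem_seminormLattice_iff.1 hP)
  obtain ⟨γ, rfl⟩ := exists_ultrapowerPi_coe_eq c
  have hγ : ∀ᶠ ν in l, (∀ i, γ ν i ∈ Set.Icc 0 1) ∧ γ ν a = 0 ∧ γ ν b = 1 :=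
    (Filter.eventually_all.2 fun i => (Filter.Germ.coe_le.1 (hc i).1).and
      (Filter.Germ.coe_le.1 (hc i).2)).and
      ((Filter.Germ.coe_eq.1 hca).and (Filter.Germ.coe_eq.1 hcb))
  obtain ⟨P, hP⟩ := (hγ.mono fun ν h => hbad ν (γ ν) a b h.1 h.2.1 h.2.2).choice
  have hPfin : (P : Ultrapower l (X → E)) ∈ seminormLattice l fun ν => pairSeminorm (N ν) :=
    coe_mem_seminormLattice.2 ⟨1, hP.mono fun ν h => by simpa using h.1⟩
  have hΦ := hfin _ (ultrapowerPi_sub_mem_seminormLattice_iff.2 hPfin)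
  have hsmul : (ultrapowerPi l X ℝ γ • ultrapowerPi l X E P : X → Ultrapower l E) =
      ultrapowerPi l X E (fun ν => γ ν • P ν : ℕ → X → E) := rfl
  rw [hsmul, LinearMap.comp_apply, LinearEquiv.coe_coe, LinearEquiv.symm_apply_apply] at hΦ
  obtain ⟨r, hr⟩ := Ultrapower.coe_mem_finiteElements.1 hΦ
  obtain ⟨ν, ⟨-, hlt⟩, hle, hνr⟩ := (hP.and (hr.and
    (Nat.hyperfilter_le_atTop (Filter.eventually_ge_atTop r)))).exists
  exact absurd (hlt.trans_le hle) (not_lt.2 (Nat.cast_le.2 hνr))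

end RealWeights

section ConvexSelection

theorem exists_functional_le_seminorm {F : Type*} [AddCommGroup F] [Module ℝ F] (p : Seminorm ℝ F)
    {T : Set F} (hT : Convex ℝ T) {A : ℝ} (hA : ∀ x ∈ T, A ≤ p x) :
    ∃ f : F →ₗ[ℝ] ℝ, (∀ x, |f x| ≤ p x) ∧ ∀ x ∈ T, A ≤ f x := by
  obtain hA₀ | hA₀ := le_or_gt A 0
  · exact ⟨0, fun x => by simp, fun x _ => hA₀⟩
  let _ : SeminormedAddCommGroup F := p.toAddGroupSeminorm.toSeminormedAddCommGroup
  let _ : NormedSpace ℝ F := ⟨fun a x => (map_smul_eq_mul p a x).le⟩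
  have hdisj : Disjoint (Metric.ball (0 : F) A) T := Set.disjoint_left.2 fun x hx hxT =>
    (hA x hxT).not_gt (mem_ball_zero_iff.1 hx)
  obtain ⟨f, u, hfu, huf⟩ :=
    geometric_hahn_banach_open (convex_ball 0 A) Metric.isOpen_ball hT hdisj
  have hu : 0 < u := by simpa using hfu 0 (Metric.mem_ball_self hA₀)
  have hle : ∀ x, A / u * f x ≤ p x := by
    intro x
    by_contra! hlt
    have hfx : 0 < f x := pos_of_mul_pos_right ((apply_nonneg p x).trans_lt hlt) (by positivity)
    have hball : (u / f x) • x ∈ Metric.ball (0 : F) A := by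
      rw [mem_ball_zero_iff]
      calc p ((u / f x) • x) = u / f x * p x := by
            rw [map_smul_eq_mul, Real.norm_of_nonneg (by positivity)]
        _ < u / f x * (A / u * f x) := by gcongr
        _ = A := by field_simp
    have := hfu _ hball
    rw [map_smul, smul_eq_mul, div_mul_cancel₀ _ hfx.ne'] at this
    exact lt_irrefl u this
  refine ⟨(A / u) • f.toLinearMap, fun x => abs_le.2 ⟨?_, hle x⟩, fun x hx => ?_⟩
  · simpa [neg_le] using hle (-x)
  · calc A = A / u * u := (div_mul_cancel₀ A hu.ne').symm
      _ ≤ A / u * f x := by gcongr; exact huf x hx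

variable {X E : Type*} [AddCommGroup E] [Module ℝ E]

theorem IsQuasiUltrametric.le_of_nearest {C : ℝ} {N : X → X → Seminorm ℝ E}
    (hN : IsQuasiUltrametric C N) {i j l : X} (hij : ∀ v, N i l v ≤ C * N i j v) (hlj : l ≠ j)
    (v : E) : N i l v ≤ C ^ 3 * N j l v := by
  have hC : 0 ≤ C := zero_le_one.trans hN.one_le
  obtain h | h := hN.le_or_le j l i hlj.symm
  · calc N i l v ≤ C * (C * (C * N j l v)) := (hij v).trans <| by
          gcongr
          exact (hN.symm j i v).trans (by gcongr; exact h v)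
      _ = C ^ 3 * N j l v := by ring
  · exact (h v).trans <| by
      gcongr
      exact le_self_pow₀ hN.one_le three_ne_zero

theorem abs_weighted_le_mul {p : Seminorm ℝ (X → E)} {f : (X → E) →ₗ[ℝ] ℝ} {c : X → ℝ} {C s : ℝ}
    (hf : ∀ P, p P ≤ 1 → |f (c • P)| ≤ C) (hs : 0 < s) {P : X → E} (hP : p P ≤ s) :
    |f (c • P)| ≤ C * s := by
  have h := hf (s⁻¹ • P) <| by
    rw [map_smul_eq_mul, Real.norm_of_nonneg (by positivity)]
    exact (inv_mul_le_one₀ hs).2 hP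
  rwa [smul_comm c, map_smul, smul_eq_mul, abs_mul, abs_inv, abs_of_pos hs, inv_mul_le_iff₀ hs,
    mul_comm] at h

theorem interpolation_mem {G : X → Set E} (hG : ∀ i, Convex ℝ (G i)) {c : X → ℝ} {a b : X}
    (hc : ∀ i, c i ∈ Set.Icc 0 1) (hca : c a = 0) (hcb : c b = 1) {P Q : X → E}
    (hP : ∀ i ≠ b, P i ∈ G i) (hQ : ∀ i ≠ a, Q i ∈ G i) (i : X) :
    (P - c • P + c • Q) i ∈ G i := by
  have hi : (P - c • P + c • Q) i = (1 - c i) • P i + c i • Q i := by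
    simp only [Pi.add_apply, Pi.sub_apply, Pi.smul_apply', sub_smul, one_smul]
  rw [hi]
  obtain rfl | hib := eq_or_ne i b
  · have hia : i ≠ a := fun h => one_ne_zero (hcb.symm.trans (h ▸ hca))
    simpa [hcb] using hQ i hia
  obtain rfl | hia := eq_or_ne i a
  · simpa [hca] using hP i hib
  · exact hG i (hP i hib) (hQ i hia) (sub_nonneg.2 (hc i).2) (hc i).1 (sub_add_cancel _ _)

variable [Fintype X]

theorem IsQuasiUltrametric.pairSeminorm_update_le {C : ℝ} {N : X → X → Seminorm ℝ E}
    (hN : IsQuasiUltrametric C N) {i j : X} (hji : j ≠ i)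
    (hij : ∀ l ≠ i, ∀ v, N i l v ≤ C * N i j v) {P : X → E} {M : ℝ}
    (hM : 0 ≤ M) (hP : ∀ a ≠ i, ∀ b ≠ i, N a b (P a - P b) ≤ M) :
    pairSeminorm N (Function.update P i (P j)) ≤ C ^ 4 * M := by
  have hC : 0 ≤ C := zero_le_one.trans hN.one_le
  have hfrom : ∀ a ≠ i, N i a (P j - P a) ≤ C ^ 3 * M := by
    intro a ha
    obtain rfl | haj := eq_or_ne a j
    · simpa using by positivity
    · exact (hN.le_of_nearest (hij a ha) haj _).trans (by gcongr; exact hP j hji a ha)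
  refine (pairSeminorm_le_iff (by positivity)).2 fun a b => ?_
  by_cases ha : a = i <;> by_cases hb : b = i
  · simpa [ha, hb] using by positivity
  · rw [ha, Function.update_self, Function.update_of_ne hb]
    exact (hfrom b hb).trans
      (mul_le_mul_of_nonneg_right (pow_le_pow_right₀ hN.one_le (by norm_num)) hM)
  · rw [hb, Function.update_self, Function.update_of_ne ha, map_sub_rev]
    calc _ ≤ C * (C ^ 3 * M) := (hN.symm i a _).trans (by gcongr; exact hfrom a ha)
      _ = C ^ 4 * M := by ring
  · rw [Function.update_of_ne ha, Function.update_of_ne hb]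
    exact (hP a ha b hb).trans (le_mul_of_one_le_left hM (one_le_pow₀ hN.one_le))

theorem exists_mem_pairSeminorm_le [FiniteDimensional ℝ E]
    (hcard : 2 ^ Module.finrank ℝ E < Fintype.card X) (C : ℝ) :
    ∃ C' : ℝ, 0 < C' ∧ ∀ N : X → X → Seminorm ℝ E, IsQuasiUltrametric C N →
      (∀ i, ∃ j ≠ i, ∀ l ≠ i, ∀ v, N i l v ≤ C * N i j v) →
      ∀ G : X → Set E, (∀ i, Convex ℝ (G i)) → ∀ M : ℝ, 0 < M →
      (∀ i, ∃ P : X → E, (∀ a ≠ i, P a ∈ G a) ∧ ∀ a ≠ i, ∀ b ≠ i, N a b (P a - P b) ≤ M) →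
      ∃ P : X → E, (∀ i, P i ∈ G i) ∧ pairSeminorm N P ≤ C' * M := by
  obtain ⟨C₁, hweight⟩ := exists_weight_of_abs_le_pairSeminorm hcard C
  refine ⟨(1 + 2 * |C₁|) * C ^ 4 + 1, by positivity, fun N hN hnear G hG M hM hsel => ?_⟩
  have hs : 0 < C ^ 4 * M := by have := zero_lt_one.trans_le hN.one_le; positivity
  have hext : ∀ i, ∃ P : X → E, (∀ a ≠ i, P a ∈ G a) ∧ pairSeminorm N P ≤ C ^ 4 * M := by
    intro i
    obtain ⟨j, hji, hij⟩ := hnear i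
    obtain ⟨P, hPG, hP⟩ := hsel i
    exact ⟨_, fun a ha => by simpa [ha] using hPG a ha,
      hN.pairSeminorm_update_le hji hij hM.le hP⟩
  by_contra! hcon
  have hconvex : Convex ℝ {P : X → E | ∀ i, P i ∈ G i} := fun P hP Q hQ s t hs ht hst i =>
    hG i (hP i) (hQ i) hs ht hst
  obtain ⟨f, hf, hfG⟩ := exists_functional_le_seminorm (pairSeminorm N) hconvex
    fun P hP => (hcon P hP).le
  obtain ⟨c, a, b, hc, hca, hcb, hfc⟩ := hweight N hN f hf
  obtain ⟨P, hPG, hP⟩ := hext b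
  obtain ⟨Q, hQG, hQ⟩ := hext a
  have hlarge := hfG _ (interpolation_mem hG hc hca hcb hPG hQG)
  have hsmall : f (P - c • P + c • Q) ≤ (1 + 2 * C₁) * (C ^ 4 * M) := by
    rw [map_add, map_sub]
    linarith [(abs_le.1 (hf P)).2, (abs_le.1 (abs_weighted_le_mul hfc hs hP)).1,
      (abs_le.1 (abs_weighted_le_mul hfc hs hQ)).2]
  have hC₁ : (1 + 2 * C₁) * (C ^ 4 * M) ≤ (1 + 2 * |C₁|) * (C ^ 4 * M) := by
    gcongr
    exact le_abs_self C₁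
  linarith

end ConvexSelection

section Polynomials

open MvPolynomial

theorem finrank_restrictTotalDegree (n d : ℕ) (R : Type*) [CommRing R] [Nontrivial R] :
    Module.finrank R (restrictTotalDegree (Fin n) R d) = (n + d).choose n := by
  have homogenize : {s : Fin n →₀ ℕ // (s.sum fun _ e => e) ≤ d} ≃
      Finset.finsuppAntidiag (Finset.univ : Finset (Fin (n + 1))) d :=
    { toFun s := ⟨s.1.cons (d - s.1.sum fun _ e => e), by
        simpa [Finsupp.sum_fintype, Fin.sum_univ_succ] using
          Nat.sub_add_cancel (by simpa [Finsupp.sum_fintype] using s.2)⟩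
      invFun t := ⟨t.1.tail, by
        have := (Finset.mem_finsuppAntidiag.1 t.2).1
        rw [Fin.sum_univ_succ] at this
        simp only [Finsupp.sum_fintype, implies_true, Finsupp.tail_apply]
        lia⟩
      left_inv s := by simp
      right_inv t := by
        have := (Finset.mem_finsuppAntidiag.1 t.2).1
        rw [Fin.sum_univ_succ] at this
        have hzero : d - (t.1.tail.sum fun _ e => e) = t.1 0 := by
          simp only [Finsupp.sum_fintype, implies_true, Finsupp.tail_apply]
          lia
        exact Subtype.ext ((congrArg (Finsupp.cons · _) hzero).trans (Finsupp.cons_tail t.1)) }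
  calc Module.finrank R (restrictTotalDegree (Fin n) R d)
      = Nat.card {s : Fin n →₀ ℕ // (s.sum fun _ e => e) ≤ d} :=
        Module.finrank_eq_nat_card_basis (basisRestrictSupport R _)
    _ = (n + d).choose n := by
        rw [Nat.card_congr homogenize, Nat.card_eq_fintype_card, Fintype.card_coe,
          Finset.card_finsuppAntidiag_nat_eq_choose, Finset.card_univ, Fintype.card_fin,
          Nat.add_right_comm, Nat.add_sub_cancel, Nat.choose_symm_add]

theorem pderiv_comm {σ R : Type*} [CommRing R] (i j : σ) (p : MvPolynomial σ R) :
    pderiv i (pderiv j p) = pderiv j (pderiv i p) := by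
  have h : ⁅pderiv (R := R) i, pderiv j⁆ = 0 := derivation_ext fun k => by
    rw [Derivation.commutator_apply]
    simp [pderiv_X, Pi.single_apply, apply_ite (pderiv _)]
  exact sub_eq_zero.1 ((Derivation.commutator_apply _).symm.trans (DFunLike.congr_fun h p))

theorem totalDegree_pderiv_lt {σ R : Type*} [CommSemiring R] {i : σ} {p : MvPolynomial σ R}
    (h : pderiv i p ≠ 0) : (pderiv i p).totalDegree < p.totalDegree := by
  obtain ⟨s, hs, hdeg⟩ := Finset.exists_mem_eq_sup _ (support_nonempty.2 h)
    fun s => s.sum fun _ e => e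
  have hmem : s + Finsupp.single i 1 ∈ p.support := by
    rw [mem_support_iff, coeff_pderiv] at hs
    exact mem_support_iff.2 (left_ne_zero_of_mul hs)
  have := le_totalDegree hmem
  rw [Finsupp.sum_add_index' (fun _ => rfl) fun _ _ _ => rfl, Finsupp.sum_single_index rfl] at this
  exact (hdeg.trans_lt (Nat.lt_succ_self _)).trans_le this

variable {n : ℕ}

theorem pairwise_commute_powersHom_pderiv (n : ℕ) :
    Pairwise fun i j : Fin n => ∀ a b : Multiplicative ℕ,
      Commute (powersHom (Module.End ℝ (MvPolynomial (Fin n) ℝ)) (pderiv i).toLinearMap a)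
        (powersHom (Module.End ℝ (MvPolynomial (Fin n) ℝ)) (pderiv j).toLinearMap b) := by
  intro i j _ a b
  rw [powersHom_apply, powersHom_apply]
  exact Commute.pow_pow (LinearMap.ext (pderiv_comm i j)) _ _

/-- `α ↦ ∂^α` as a monoid homomorphism from multi-indices to linear operators on polynomials. -/
def iteratedPDeriv (n : ℕ) :
    (Fin n → Multiplicative ℕ) →* Module.End ℝ (MvPolynomial (Fin n) ℝ) :=
  MonoidHom.noncommPiCoprod _ (pairwise_commute_powersHom_pderiv n)

theorem polyPD_eq_iteratedPDeriv (α : Fin n → ℕ) (p : MvPolynomial (Fin n) ℝ) :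
    polyPD α p = iteratedPDeriv n (fun i => .ofAdd (α i)) p := by
  have hprod : ∀ l : List (Fin n),
      l.foldr (fun i q => (fun r => pderiv i r)^[α i] q) p =
        (l.map fun i => (pderiv i).toLinearMap ^ α i).prod p := by
    intro l
    induction l with
    | nil => rfl
    | cons i l ih =>
      rw [List.foldr_cons, ih, List.map_cons, List.prod_cons, Module.End.mul_apply,
        Module.End.pow_apply]
      rfl
  rw [polyPD, hprod, iteratedPDeriv, MonoidHom.noncommPiCoprod_apply]
  simp only [← List.toFinset_finRange, powersHom_apply, toAdd_ofAdd]
  rw [Finset.noncommProd_toFinset _ _ _ (List.nodup_finRange n)]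

theorem polyPD_add (α β : Fin n → ℕ) (p : MvPolynomial (Fin n) ℝ) :
    polyPD (α + β) p = polyPD α (polyPD β p) := by
  simp only [polyPD_eq_iteratedPDeriv, ← Module.End.mul_apply, ← map_mul]
  rfl

theorem polyPD_single (i : Fin n) (p : MvPolynomial (Fin n) ℝ) :
    polyPD (Pi.single i 1) p = pderiv i p := by
  have hsingle : (fun j => .ofAdd ((Pi.single i 1 : Fin n → ℕ) j) : Fin n → Multiplicative ℕ) =
      Pi.mulSingle i (.ofAdd 1) := rfl
  rw [polyPD_eq_iteratedPDeriv, hsingle, iteratedPDeriv, MonoidHom.noncommPiCoprod_mulSingle,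
    powersHom_apply, toAdd_ofAdd, pow_one, Derivation.coeFn_coe]

theorem polyPD_eq_zero_of_totalDegree_lt {α : Fin n → ℕ} {p : MvPolynomial (Fin n) ℝ}
    (h : p.totalDegree < ∑ i, α i) : polyPD α p = 0 := by
  induction hk : ∑ i, α i generalizing α p with
  | zero => exact absurd (hk ▸ h) (Nat.not_lt_zero _)
  | succ k ih =>
    obtain ⟨i, -, hi⟩ := Finset.exists_ne_zero_of_sum_ne_zero (hk.trans_ne k.succ_ne_zero)
    obtain ⟨β, rfl⟩ : ∃ β : Fin n → ℕ, α = β + Pi.single i 1 :=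
      le_iff_exists_add'.1 (update_le_iff.2
        ⟨Nat.one_le_iff_ne_zero.2 hi, fun _ _ => Nat.zero_le _⟩)
    simp only [Pi.add_apply, Finset.sum_add_distrib, Finset.sum_pi_single', Finset.mem_univ,
      if_true] at h hk
    rw [polyPD_add, polyPD_single]
    by_cases hzero : pderiv i p = 0
    · rw [hzero, polyPD_eq_iteratedPDeriv, map_zero]
    · exact ih (by have := totalDegree_pderiv_lt hzero; lia) (by lia)

theorem hasFDerivAt_eval (p : MvPolynomial (Fin n) ℝ) (x : En n) :
    HasFDerivAt (fun x : En n => eval (fun i => x i) p)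
      (∑ i, eval (fun i => x i) (pderiv i p) • EuclideanSpace.proj (𝕜 := ℝ) i) x := by
  induction p using MvPolynomial.induction_on with
  | C a => simpa using hasFDerivAt_const a x
  | add p q hp hq =>
    simp only [map_add, add_smul, Finset.sum_add_distrib]
    exact hp.fun_add hq
  | mul_X p j hp =>
    have hX : HasFDerivAt (fun x : En n => x j) (EuclideanSpace.proj (𝕜 := ℝ) j) x :=
      (EuclideanSpace.proj (𝕜 := ℝ) j).hasFDerivAt
    simp only [map_mul, eval_X]
    refine (hp.fun_mul hX).congr_fderiv ?_
    ext v
    simp [Pi.single_apply, apply_ite (eval _), ite_mul, add_mul, Finset.sum_add_distrib,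
      Finset.mul_sum, mul_assoc]

theorem abs_eval_sub_eval_le {p : MvPolynomial (Fin n) ℝ} {x y : En n} {B : ℝ}
    (hB : ∀ i, ∀ z ∈ segment ℝ x y, |eval (fun i => z i) (pderiv i p)| ≤ B) :
    |eval (fun i => y i) p - eval (fun i => x i) p| ≤ n * B * dist x y := by
  rw [dist_comm, dist_eq_norm, ← Real.norm_eq_abs]
  refine Convex.norm_image_sub_le_of_norm_hasFDerivWithin_le
    (fun z _ => (hasFDerivAt_eval p z).hasFDerivWithinAt) (fun z hz => ?_) (convex_segment x y)
    (left_mem_segment ℝ x y) (right_mem_segment ℝ x y)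
  have hproj (i : Fin n) : ‖(EuclideanSpace.proj (𝕜 := ℝ) i : En n →L[ℝ] ℝ)‖ ≤ 1 :=
    ContinuousLinearMap.opNorm_le_bound _ zero_le_one fun v => by
      simpa using PiLp.norm_apply_le v i
  calc _ ≤ ∑ _i : Fin n, B := norm_sum_le_of_le _ fun i _ => by
        rw [norm_smul, Real.norm_eq_abs]
        exact (mul_le_of_le_one_right (abs_nonneg _) (hproj i)).trans (hB i z hz)
    _ = n * B := by simp

theorem abs_polyPDval_le_of_mem_segment {m : ℕ} {p : MvPolynomial (Fin n) ℝ}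
    (hp : p.totalDegree < m) {x y : En n} {M : ℝ} (hM : 0 ≤ M)
    (hx : ∀ α : Fin n → ℕ, ∑ i, α i < m → |polyPDval α p x| ≤ M * dist x y ^ (m - ∑ i, α i))
    {k : ℕ} {α : Fin n → ℕ} (hα : ∑ i, α i + k = m) {z : En n} (hz : z ∈ segment ℝ x y) :
    |polyPDval α p z| ≤ M * ((n + 1) * dist x y) ^ k := by
  induction k generalizing α z with
  | zero =>
    rw [polyPDval, polyPD_eq_zero_of_totalDegree_lt (by lia)]
    simpa using hM
  | succ k ih =>
    have hseg : segment ℝ x z ⊆ segment ℝ x y :=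
      (convex_segment x y).segment_subset (left_mem_segment ℝ x y) hz
    have hdist : dist x z ≤ dist x y := by
      simpa [dist_comm] using segment_subset_closedBall_left x y hz
    have hstart : |polyPDval α p x| ≤ M * dist x y ^ (k + 1) :=
      (hx α (by lia)).trans_eq (by rw [← hα, Nat.add_sub_cancel_left])
    have hmean : |polyPDval α p z - polyPDval α p x| ≤
        n * (M * ((n + 1) * dist x y) ^ k) * dist x z :=
      abs_eval_sub_eval_le fun i w hw => by
        rw [← polyPD_single, ← polyPD_add]
        exact ih (by simp [Finset.sum_add_distrib]; lia) (hseg hw)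
    have hone : M * dist x y ^ (k + 1) ≤ (n + 1) ^ k * (M * dist x y ^ (k + 1)) :=
      le_mul_of_one_le_left (by positivity) (one_le_pow₀ (by simp))
    calc |polyPDval α p z| ≤ |polyPDval α p x| + |polyPDval α p z - polyPDval α p x| := by
          simpa using abs_add_le (polyPDval α p x) (polyPDval α p z - polyPDval α p x)
      _ ≤ (n + 1) ^ k * (M * dist x y ^ (k + 1)) +
          n * (M * ((n + 1) * dist x y) ^ k) * dist x y :=
        add_le_add (hstart.trans hone) (hmean.trans (by gcongr))
      _ = M * ((n + 1) * dist x y) ^ (k + 1) := by simp only [mul_pow]; ring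

end Polynomials

section Whitney

variable {m n D : ℕ}

/-- The Whitney seminorm `max_{|α| < m, j} |∂^α P_j(x)| / |x - y|^(m - |α|)` at the base point
`x` and scale `|x - y|`. It vanishes when `x = y`, since then all quotients are `· / 0 = 0`. -/
def whitneySeminorm (m : ℕ) (x y : En n) : Seminorm ℝ (Fin D → MvPolynomial (Fin n) ℝ) :=
  ((Finset.range m).biUnion (Finset.piAntidiag Finset.univ) ×ˢ Finset.univ).sup fun a =>
    (nndist x y ^ (m - ∑ i, a.1 i))⁻¹ • (normSeminorm ℝ ℝ).comp
      ((MvPolynomial.aeval fun i => x i).toLinearMap ∘ₗ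
        iteratedPDeriv n (fun i => .ofAdd (a.1 i)) ∘ₗ LinearMap.proj a.2)

theorem whitneySeminorm_le_iff {x y : En n} {P : Fin D → MvPolynomial (Fin n) ℝ} {M : ℝ}
    (hM : 0 ≤ M) : whitneySeminorm m x y P ≤ M ↔ ∀ (α : Fin n → ℕ) (j : Fin D), ∑ i, α i < m →
      |polyPDval α (P j) x| / dist x y ^ (m - ∑ i, α i) ≤ M := by
  rw [whitneySeminorm, Seminorm.finset_sup_apply, ← NNReal.coe_mk M hM, NNReal.coe_le_coe,
    Finset.sup_le_iff]
  simp [← NNReal.coe_le_coe, polyPDval, polyPD_eq_iteratedPDeriv, NNReal.smul_def,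
    div_eq_inv_mul, MvPolynomial.aeval_eq_eval]

theorem abs_polyPDval_le_whitneySeminorm {x y : En n} (hxy : x ≠ y)
    (P : Fin D → MvPolynomial (Fin n) ℝ) {α : Fin n → ℕ} (hα : ∑ i, α i < m) (j : Fin D) :
    |polyPDval α (P j) x| ≤ whitneySeminorm m x y P * dist x y ^ (m - ∑ i, α i) :=
  (div_le_iff₀ (pow_pos (dist_pos.2 hxy) _)).1
    ((whitneySeminorm_le_iff (apply_nonneg _ _)).1 le_rfl α j hα)

theorem whitneySeminorm_swap_le (x y : En n) {P : Fin D → MvPolynomial (Fin n) ℝ}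
    (hP : ∀ j, (P j).totalDegree < m) :
    whitneySeminorm m y x P ≤ (n + 1) ^ m * whitneySeminorm m x y P := by
  obtain rfl | hxy := eq_or_ne x y
  · exact le_mul_of_one_le_left (apply_nonneg _ _) (one_le_pow₀ (by simp))
  refine (whitneySeminorm_le_iff (by positivity)).2 fun α j hα => ?_
  rw [dist_comm, div_le_iff₀ (pow_pos (dist_pos.2 hxy) _)]
  calc |polyPDval α (P j) y|
      ≤ whitneySeminorm m x y P * ((n + 1) * dist x y) ^ (m - ∑ i, α i) :=
        abs_polyPDval_le_of_mem_segment (hP j) (apply_nonneg _ _)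
          (fun β hβ => abs_polyPDval_le_whitneySeminorm hxy P hβ j)
          (Nat.add_sub_of_le hα.le) (right_mem_segment ℝ x y)
    _ = (n + 1) ^ (m - ∑ i, α i) * whitneySeminorm m x y P * dist x y ^ (m - ∑ i, α i) := by
        rw [mul_pow]; ring
    _ ≤ (n + 1) ^ m * whitneySeminorm m x y P * dist x y ^ (m - ∑ i, α i) := by
        gcongr
        · simp
        · exact Nat.sub_le _ _

theorem whitneySeminorm_le_of_dist_le {x y z : En n} (hxy : x ≠ y)
    (h : dist x y ≤ 2 * dist x z) (P : Fin D → MvPolynomial (Fin n) ℝ) :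
    whitneySeminorm m x z P ≤ 2 ^ m * whitneySeminorm m x y P := by
  have hxz : 0 < dist x z := by linarith [dist_pos.2 hxy]
  refine (whitneySeminorm_le_iff (by positivity)).2 fun α j hα => ?_
  rw [div_le_iff₀ (pow_pos hxz _)]
  calc |polyPDval α (P j) x| ≤ whitneySeminorm m x y P * dist x y ^ (m - ∑ i, α i) :=
        abs_polyPDval_le_whitneySeminorm hxy P hα j
    _ ≤ whitneySeminorm m x y P * (2 * dist x z) ^ (m - ∑ i, α i) := by gcongr
    _ = 2 ^ (m - ∑ i, α i) * whitneySeminorm m x y P * dist x z ^ (m - ∑ i, α i) := by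
        rw [mul_pow]; ring
    _ ≤ 2 ^ m * whitneySeminorm m x y P * dist x z ^ (m - ∑ i, α i) := by
        gcongr
        · norm_num
        · exact Nat.sub_le _ _

/-- The space of `D`-tuples of polynomials of degree at most `m - 1`. -/
abbrev PolyTuple (m n D : ℕ) : Type :=
  Fin D → MvPolynomial.restrictTotalDegree (Fin n) ℝ (m - 1)

/-- The inclusion of `PolyTuple m n D` into all tuples of polynomials. -/
def PolyTuple.subtype (m n D : ℕ) :
    PolyTuple m n D →ₗ[ℝ] Fin D → MvPolynomial (Fin n) ℝ :=
  (MvPolynomial.restrictTotalDegree (Fin n) ℝ (m - 1)).subtype.compLeft (Fin D)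

theorem finrank_polyTuple (hm : 1 ≤ m) :
    Module.finrank ℝ (PolyTuple m n D) = D * (n + m - 1).choose n := by
  rw [Module.finrank_pi_fintype, Finset.sum_const, Finset.card_univ, Fintype.card_fin, smul_eq_mul,
    finrank_restrictTotalDegree, Nat.add_sub_assoc hm]

theorem PolyTuple.exists_subtype_eq {P : Fin D → MvPolynomial (Fin n) ℝ}
    (hP : ∀ j, (P j).totalDegree ≤ m - 1) : ∃ v, PolyTuple.subtype m n D v = P :=
  ⟨fun j => ⟨P j, (MvPolynomial.mem_restrictTotalDegree _ _ _).2 (hP j)⟩, rfl⟩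

theorem PolyTuple.totalDegree_subtype_lt (hm : 1 ≤ m) (v : PolyTuple m n D) (j : Fin D) :
    (PolyTuple.subtype m n D v j).totalDegree < m :=
  (Nat.le_sub_one_iff_lt hm).1 ((MvPolynomial.mem_restrictTotalDegree _ _ _).1 (v j).2)

/-- The Whitney seminorms between the points of a family `x`, on tuples of polynomials of degree
at most `m - 1`. -/
def whitneyPairing {X : Type*} (m D : ℕ) (x : X → En n) (i j : X) : Seminorm ℝ (PolyTuple m n D) :=
  (whitneySeminorm m (x i) (x j)).comp (PolyTuple.subtype m n D)

theorem whitneyPairing_le_of_dist_le {X : Type*} {x : X → En n} {i j l : X} (hij : x i ≠ x j)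
    (h : dist (x i) (x j) ≤ 2 * dist (x i) (x l)) (v : PolyTuple m n D) :
    whitneyPairing m D x i l v ≤ (2 * (n + 1) ^ 2) ^ m * whitneyPairing m D x i j v := by
  refine (whitneySeminorm_le_of_dist_le hij h (PolyTuple.subtype m n D v)).trans ?_
  rw [whitneyPairing, Seminorm.comp_apply]
  gcongr
  exact le_mul_of_one_le_right two_pos.le (one_le_pow₀ (by simp))

theorem isQuasiUltrametric_whitneyPairing {X : Type*} (hm : 1 ≤ m) {x : X → En n}
    (hx : Function.Injective x) :
    IsQuasiUltrametric ((2 * (n + 1) ^ 2) ^ m) (whitneyPairing m D x) := by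
  have hswap (i j : X) (v : PolyTuple m n D) :
      whitneyPairing m D x j i v ≤ (n + 1) ^ m * whitneyPairing m D x i j v :=
    whitneySeminorm_swap_le _ _ (PolyTuple.totalDegree_subtype_lt hm v)
  have hone : (1 : ℝ) ≤ (n + 1) ^ 2 := one_le_pow₀ (by simp)
  refine ⟨one_le_pow₀ (by linarith), fun i j v => (hswap i j v).trans ?_, fun i j l hij => ?_⟩
  · gcongr
    nlinarith [n.cast_nonneg (α := ℝ)]
  obtain h | h : dist (x i) (x j) ≤ 2 * dist (x i) (x l) ∨
      dist (x j) (x i) ≤ 2 * dist (x j) (x l) := by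
    rw [or_iff_not_imp_left, dist_comm (x j), dist_comm (x j)]
    intro h
    linarith [dist_triangle (x i) (x l) (x j)]
  · exact .inl (whitneyPairing_le_of_dist_le (hx.ne hij) h)
  · refine .inr fun v => ?_
    calc whitneyPairing m D x l j v
        ≤ (n + 1) ^ m * whitneyPairing m D x j l v := hswap j l v
      _ ≤ (n + 1) ^ m * (2 ^ m * whitneyPairing m D x j i v) := by
          gcongr
          exact whitneySeminorm_le_of_dist_le (hx.ne hij.symm) h _
      _ ≤ (n + 1) ^ m * (2 ^ m * ((n + 1) ^ m * whitneyPairing m D x i j v)) := by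
          gcongr
          exact hswap i j v
      _ = (2 * (n + 1) ^ 2) ^ m * whitneyPairing m D x i j v := by
          rw [mul_pow, ← pow_mul]; ring

theorem exists_whitneyPairing_le {X : Type*} [Finite X] [Nontrivial X] {x : X → En n}
    (hx : Function.Injective x) (i : X) : ∃ j ≠ i, ∀ l ≠ i, ∀ v,
      whitneyPairing m D x i l v ≤ (2 * (n + 1) ^ 2) ^ m * whitneyPairing m D x i j v := by
  obtain ⟨j, hj, hmin⟩ := Set.exists_min_image {l | l ≠ i} (fun l => dist (x i) (x l))
    (Set.toFinite _) (exists_ne i)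
  exact ⟨j, hj, fun l hl => whitneyPairing_le_of_dist_le (hx.ne hj.symm)
    ((hmin l hl).trans (le_mul_of_one_le_left dist_nonneg one_le_two))⟩

theorem WNormHomog_nonneg {T : Finset (En n)} {P : En n → Fin D → MvPolynomial (Fin n) ℝ} :
    0 ≤ WNormHomog m T P := by
  refine Real.sSup_nonneg ?_
  rintro r ⟨x, -, y, -, -, α, -, j, rfl⟩
  positivity

theorem bddAbove_whitneyQuotients (hm : 1 ≤ m) (T : Finset (En n))
    (P : En n → Fin D → MvPolynomial (Fin n) ℝ) :
    BddAbove {r : ℝ | ∃ x ∈ T, ∃ y ∈ T, x ≠ y ∧ ∃ α : Fin n → ℕ, ∑ i, α i ≤ m - 1 ∧ ∃ j,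
      r = |polyPDval α (P x j - P y j) x| / dist x y ^ (m - ∑ i, α i)} := by
  let f (p : En n × En n) : ℝ := whitneySeminorm m p.1 p.2 (P p.1 - P p.2)
  have hf (p) : 0 ≤ f p := apply_nonneg _ _
  refine ⟨∑ p ∈ T ×ˢ T, f p, ?_⟩
  rintro r ⟨x, hx, y, hy, -, α, hα, j, rfl⟩
  have hle : f (x, y) ≤ ∑ p ∈ T ×ˢ T, f p :=
    Finset.single_le_sum (fun p _ => hf p) (Finset.mk_mem_product hx hy)
  exact (whitneySeminorm_le_iff (P := P x - P y) ((hf _).trans hle)).1 hle α j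
    ((Nat.le_sub_one_iff_lt hm).1 hα)

theorem WNormHomog_le_iff (hm : 1 ≤ m) {T : Finset (En n)}
    {P : En n → Fin D → MvPolynomial (Fin n) ℝ} {M : ℝ} (hM : 0 ≤ M) :
    WNormHomog m T P ≤ M ↔ ∀ x ∈ T, ∀ y ∈ T, whitneySeminorm m x y (P x - P y) ≤ M := by
  have hlt {s : ℕ} : s ≤ m - 1 ↔ s < m := Nat.le_sub_one_iff_lt hm
  constructor
  · intro h x hx y hy
    obtain rfl | hxy := eq_or_ne x y
    · simpa using hM
    exact (whitneySeminorm_le_iff hM).2 fun α j hα => (le_csSup (bddAbove_whitneyQuotients hm T P)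
      ⟨x, hx, y, hy, hxy, α, hlt.2 hα, j, rfl⟩).trans h
  · intro h
    refine Real.sSup_le ?_ hM
    rintro r ⟨x, hx, y, hy, -, α, hα, j, rfl⟩
    exact (whitneySeminorm_le_iff hM).1 (h x hx y hy) α j (hlt.1 hα)

end Whitney

section Selection

variable {m n D : ℕ} {S : Finset (En n)} {G : En n → Set (Fin D → MvPolynomial (Fin n) ℝ)}

/-- A family of nonempty convex sets of tuples of polynomials of degree at most `m - 1`, indexed
by the points of `S`. -/
def IsConvexFamily (m : ℕ) (S : Finset (En n))
    (G : En n → Set (Fin D → MvPolynomial (Fin n) ℝ)) : Prop :=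
  ∀ x ∈ S, (G x).Nonempty ∧ Convex ℝ (G x) ∧ ∀ P ∈ G x, ∀ j, (P j).totalDegree ≤ m - 1

theorem IsConvexFamily.mono {T : Finset (En n)} (hG : IsConvexFamily m S G) (hT : T ⊆ S) :
    IsConvexFamily m T G := fun x hx => hG x (hT hx)

theorem selNormHomog_nonneg : 0 ≤ selNormHomog m S G :=
  Real.sInf_nonneg fun _ ⟨_, _, hr⟩ => hr ▸ WNormHomog_nonneg

theorem selNormHomog_le_WNormHomog {P : En n → Fin D → MvPolynomial (Fin n) ℝ}
    (hP : ∀ x ∈ S, P x ∈ G x) : selNormHomog m S G ≤ WNormHomog m S P :=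
  csInf_le ⟨0, fun _ ⟨_, _, hr⟩ => hr ▸ WNormHomog_nonneg⟩ ⟨P, hP, rfl⟩

theorem exists_WNormHomog_lt_of_selNormHomog_lt (hG : ∀ x ∈ S, (G x).Nonempty) {M : ℝ}
    (hM : selNormHomog m S G < M) : ∃ P, (∀ x ∈ S, P x ∈ G x) ∧ WNormHomog m S P < M := by
  choose! P hP using hG
  obtain ⟨_, ⟨Q, hQ, rfl⟩, hlt⟩ := exists_lt_of_csInf_lt (by exact ⟨_, P, hP, rfl⟩) hM
  exact ⟨Q, hQ, hlt⟩

/-- The trace of `G` at the points of a family `x`, as sets of `PolyTuple`s. -/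
def polyTupleFamily {X : Type*} (m : ℕ) (x : X → En n)
    (G : En n → Set (Fin D → MvPolynomial (Fin n) ℝ)) (i : X) : Set (PolyTuple m n D) :=
  PolyTuple.subtype m n D ⁻¹' G (x i)

theorem exists_polyTuple_of_selNormHomog_erase_lt (hm : 1 ≤ m) {X : Type*} [Fintype X]
    (x : X ↪ En n) (hG : IsConvexFamily m (Finset.univ.map x) G) {M : ℝ} (i : X)
    (hM : selNormHomog m ((Finset.univ.map x).erase (x i)) G < M) :
    ∃ P : X → PolyTuple m n D, (∀ a ≠ i, P a ∈ polyTupleFamily m x G a) ∧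
      ∀ a ≠ i, ∀ b ≠ i, whitneyPairing m D x a b (P a - P b) ≤ M := by
  obtain ⟨Q, hQ, hlt⟩ := exists_WNormHomog_lt_of_selNormHomog_lt
    (fun y hy => (hG y (Finset.mem_of_mem_erase hy)).1) hM
  have hmem {a : X} (ha : a ≠ i) : x a ∈ (Finset.univ.map x).erase (x i) := by simpa using ha
  have hlift : ∀ a ≠ i, ∃ v, PolyTuple.subtype m n D v = Q (x a) := fun a ha =>
    PolyTuple.exists_subtype_eq
      ((hG (x a) (Finset.mem_of_mem_erase (hmem ha))).2.2 _ (hQ _ (hmem ha)))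
  choose! P hP using hlift
  refine ⟨P, fun a ha => ?_, fun a ha b hb => ?_⟩
  · rw [polyTupleFamily, Set.mem_preimage, hP a ha]
    exact hQ _ (hmem ha)
  · rw [whitneyPairing, Seminorm.comp_apply, map_sub, hP a ha, hP b hb]
    exact (WNormHomog_le_iff hm (WNormHomog_nonneg.trans hlt.le)).1 hlt.le _ (hmem ha) _ (hmem hb)

theorem selNormHomog_map_le_of_pairSeminorm_le (hm : 1 ≤ m) {X : Type*} [Fintype X]
    {x : X ↪ En n} {P : X → PolyTuple m n D} {M : ℝ} (hP : ∀ i, P i ∈ polyTupleFamily m x G i)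
    (hM : pairSeminorm (whitneyPairing m D x) P ≤ M) :
    selNormHomog m (Finset.univ.map x) G ≤ M := by
  set Q := Function.extend x (fun i => PolyTuple.subtype m n D (P i)) 0
  have hQ (i : X) : Q (x i) = PolyTuple.subtype m n D (P i) := x.injective.extend_apply _ _ i
  have hM₀ : 0 ≤ M := (apply_nonneg _ _).trans hM
  refine (selNormHomog_le_WNormHomog (P := Q) ?_).trans ((WNormHomog_le_iff hm hM₀).2 ?_)
  · simpa [hQ, polyTupleFamily] using hP
  · simpa [hQ, whitneyPairing] using (pairSeminorm_le_iff hM₀).1 hM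

theorem exists_selNormHomog_le_of_erase_lt (hm : 1 ≤ m) {k : ℕ}
    (hk : 2 ^ (D * (n + m - 1).choose n) < k) :
    ∃ C : ℝ, 0 < C ∧ ∀ (S : Finset (En n)) (G : En n → Set (Fin D → MvPolynomial (Fin n) ℝ)),
      S.card = k → IsConvexFamily m S G → ∀ M, 0 < M →
        (∀ x ∈ S, selNormHomog m (S.erase x) G < M) → selNormHomog m S G ≤ C * M := by
  have : Nontrivial (Fin k) := Fin.nontrivial_iff_two_le.2 (Nat.one_le_two_pow.trans_lt hk)
  obtain ⟨C, hC, hmain⟩ := exists_mem_pairSeminorm_le (X := Fin k) (E := PolyTuple m n D)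
    (by rwa [finrank_polyTuple hm, Fintype.card_fin]) ((2 * (n + 1) ^ 2) ^ m)
  refine ⟨C, hC, fun S G hS hG M hM herase => ?_⟩
  obtain ⟨x, rfl⟩ : ∃ x : Fin k ↪ En n, Finset.univ.map x = S :=
    ⟨(S.equivFinOfCardEq hS).symm.toEmbedding.trans (.subtype _), by
      rw [← Finset.map_map, Finset.map_univ_equiv, Finset.univ_eq_attach,
        Finset.attach_map_val]⟩
  have hmem (i : Fin k) : x i ∈ Finset.univ.map x := Finset.mem_map_of_mem x (Finset.mem_univ i)
  obtain ⟨P, hP, hle⟩ := hmain _ (isQuasiUltrametric_whitneyPairing hm x.injective)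
    (exists_whitneyPairing_le x.injective) (polyTupleFamily m x G)
    (fun i => (hG _ (hmem i)).2.1.linear_preimage _) M hM
    fun i => exists_polyTuple_of_selNormHomog_erase_lt hm x hG i (herase _ (hmem i))
  exact selNormHomog_map_le_of_pairSeminorm_le hm hP hle

theorem exists_selNormHomog_le_mul_erase (hm : 1 ≤ m) {k : ℕ}
    (hk : 2 ^ (D * (n + m - 1).choose n) < k) :
    ∃ C : ℝ, 0 < C ∧ ∀ (S : Finset (En n)) (G : En n → Set (Fin D → MvPolynomial (Fin n) ℝ)),
      S.card = k → IsConvexFamily m S G →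
        ∃ x ∈ S, selNormHomog m S G ≤ C * selNormHomog m (S.erase x) G := by
  obtain ⟨C, hC, hstep⟩ := exists_selNormHomog_le_of_erase_lt hm hk
  refine ⟨C, hC, fun S G hS hG => ?_⟩
  obtain ⟨x, hx, hmax⟩ := S.exists_max_image (fun x => selNormHomog m (S.erase x) G)
    (Finset.card_pos.1 (hS ▸ Nat.zero_lt_of_lt hk))
  refine ⟨x, hx, (div_le_iff₀' hC).1 (le_of_forall_gt_imp_ge_of_dense fun M hM => ?_)⟩
  exact (div_le_iff₀' hC).2 (hstep S G hS hG M (selNormHomog_nonneg.trans_lt hM)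
    fun y hy => (hmax y hy).trans_lt hM)

end Selection

theorem selection_norm_finiteness_homogeneous_general (m n D : ℕ) (hm : 1 ≤ m) (N : ℕ) :
    ∃ C : ℝ, 0 < C ∧
      ∀ S : Finset (En n), S.card ≤ N →
      ∀ G : En n → Set (Fin D → MvPolynomial (Fin n) ℝ), IsConvexFamily m S G →
        ∃ S' ⊆ S, S'.card ≤ 2 ^ (D * (n + m - 1).choose n) ∧
          selNormHomog m S G ≤ C * selNormHomog m S' G := by
  induction N with
  | zero =>
    exact ⟨1, one_pos, fun S hS G _ => ⟨S, subset_rfl, hS.trans (Nat.zero_le _), (one_mul _).ge⟩⟩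
  | succ k ih =>
    obtain ⟨C, hC, ih⟩ := ih
    obtain hk | hk := le_or_gt (k + 1) (2 ^ (D * (n + m - 1).choose n))
    · exact ⟨1, one_pos, fun S hS G _ => ⟨S, subset_rfl, hS.trans hk, (one_mul _).ge⟩⟩
    obtain ⟨A, hA, hstep⟩ := exists_selNormHomog_le_mul_erase hm hk
    refine ⟨max A 1 * C, by positivity, fun S hS G hG => ?_⟩
    obtain ⟨T, hTS, hT, hle⟩ : ∃ T ⊆ S, T.card ≤ k ∧
        selNormHomog m S G ≤ max A 1 * selNormHomog m T G := by
      obtain hlt | hS := hS.lt_or_eq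
      · exact ⟨S, subset_rfl, Nat.le_of_lt_succ hlt,
          le_mul_of_one_le_left selNormHomog_nonneg (le_max_right _ _)⟩
      · obtain ⟨x, hx, hle⟩ := hstep S G hS hG
        refine ⟨S.erase x, S.erase_subset x, (Finset.card_erase_of_mem hx).trans_le ?_,
          hle.trans (mul_le_mul_of_nonneg_right (le_max_left _ _) selNormHomog_nonneg)⟩
        exact (congrArg (· - 1) hS).le
    obtain ⟨S', hS', hcard, hle'⟩ := ih T hT G (hG.mono hTS)
    refine ⟨S', hS'.trans hTS, hcard, hle.trans ?_⟩
    rw [mul_assoc]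
    gcongr

/-- **Finiteness reduction for the homogeneous selection seminorm**: for `S` of at most
`N` points and diameter `≤ 1`, there is `S' ⊆ S` of at most `2^(dim 𝒫⃗)` points whose
selection seminorm controls that of `S`, with a constant depending only on `m, n, D, N`. -/
theorem selection_norm_finiteness_homogeneous
    (m n D : ℕ) (hm : 1 ≤ m) (hn : 1 ≤ n) (hD : 1 ≤ D) (N : ℕ) (hN : 0 < N) :
    ∃ C : ℝ, 0 < C ∧
      ∀ S : Finset (En n), S.card ≤ N → (∀ x ∈ S, ∀ y ∈ S, dist x y ≤ 1) →
      ∀ G : En n → Set (Fin D → MvPolynomial (Fin n) ℝ),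
        (∀ x ∈ S, (G x).Nonempty ∧ Convex ℝ (G x) ∧
          ∀ P ∈ G x, ∀ j, (P j).totalDegree ≤ m - 1) →
        ∃ S' : Finset (En n), S' ⊆ S ∧ S'.card ≤ 2 ^ (D * Nat.choose (n + m - 1) n) ∧
          selNormHomog m S G ≤ C * selNormHomog m S' G := by
  obtain ⟨C, hC, hmain⟩ := selection_norm_finiteness_homogeneous_general m n D hm N
  exact ⟨C, hC, fun S hS _ => hmain S hS⟩

end
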